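/- For any simple root system Π of ŝl(m|n) with m, n ≥ 2 and m ≠ n, the minimalistic affine super Yangian Y_ℏ(ŝl(m|n,Π)) is isomorphic, as an associative superalgebra, to the Drinfeld affine super Yangian Y^D_ℏ(ŝl(m|n,Π)), via the map sending the generators x^±_{α_i,r}, h_{α_i,r} with r ∈ {0,1} to the generators of the same name. -/

import Mathlib

/-!
Common framework for formalizing statements about affine super Yangians
`Y_ℏ(ŝl(m|n,Π))` attached to a simple root system `Π` of the affine
Kac–Moody superalgebra `ŝl(m|n)` of type `A^{(1)}(m−1|n−1)`.
-/

noncomputable section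

namespace ASY

open scoped TensorProduct

/-- The ground ring `ℂ[ℏ]`. -/
abbrev R : Type := Polynomial ℂ

/-- The formal deformation parameter `ℏ`. -/
def hbar : R := Polynomial.X

/-- `1/2` as an element of `ℂ[ℏ]`. -/
def half : R := Polynomial.C (1/2 : ℂ)

/-- The sign `(−1)^{p(a)p(b)}` attached to parities `pa`, `pb`. -/
def sg (pa pb : Bool) : R := if pa && pb then -1 else 1

section SuperOps

variable {Y : Type*} [Ring Y] [Algebra R Y]

/-- The supercommutator `[a,b] = ab − (−1)^{p(a)p(b)} ba` of homogeneous elements of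
parities `pa` and `pb`. -/
def sbr (pa pb : Bool) (x y : Y) : Y := x * y - sg pa pb • (y * x)

/-- The super anticommutator `{a,b} = ab + (−1)^{p(a)p(b)} ba`. -/
def sac (pa pb : Bool) (x y : Y) : Y := x * y + sg pa pb • (y * x)

/-- Iterated super-adjoint action `(ad x)^k y` for `x` of parity `pa` and `y` of parity `pb`. -/
def adN (pa pb : Bool) (x : Y) : ℕ → Y → Y
  | 0, y => y
  | k + 1, y => sbr pa (xor pb (pa && decide (k % 2 = 1))) x (adN pa pb x k y)

/-- Iterated super-bracket `[x₁,[x₂,…,[x_k, y]…]]`, all `xᵢ` of parity `pa`, `y` of parity `pb`. -/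
def adSeq (pa pb : Bool) : List Y → Y → Y
  | [], y => y
  | x :: l, y => sbr pa (xor pb (pa && decide (l.length % 2 = 1))) x (adSeq pa pb l y)

end SuperOps

/-- A simple root system `Π` of the affine Kac–Moody superalgebra `ŝl(m|n)`
(type `A^{(1)}(m−1|n−1)`): a cyclic arrangement of the `m + n` weights
`ε₁,…,ε_m, δ₁,…,δ_n`, recorded by the type of the weight at each position
(`false` = an `ε`-weight of norm `+1`, `true` = a `δ`-weight of norm `−1`);
the simple roots are `α_i = e_i − e_{i+1}` (indices mod `m+n`). -/
structure SimpleRootSystem (m n : ℕ) : Type where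
  /-- the type of the weight at each position -/
  τ : Fin (m + n) → Bool
  /-- there are exactly `n` weights of `δ`-type -/
  card_delta : (Finset.univ.filter fun k => τ k = true).card = n

namespace SimpleRootSystem

variable {m n : ℕ}

/-- The norm `(e_k, e_k) = ±1` of the `k`-th weight. -/
def w (P : SimpleRootSystem m n) (k : Fin (m + n)) : ℤ := if P.τ k then -1 else 1

variable [NeZero (m + n)]

/-- The coefficient of `e_k` in the simple root `α_i = e_i − e_{i+1}`. -/
def coeffα (i k : Fin (m + n)) : ℤ := (if k = i then 1 else 0) - (if k = i + 1 then 1 else 0)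

/-- The (symmetric) Cartan matrix `a_{ij} = (α_i, α_j)` of `Π`. -/
def a (P : SimpleRootSystem m n) (i j : Fin (m + n)) : ℤ :=
  ∑ k, P.w k * coeffα i k * coeffα j k

/-- The parity of the simple root `α_i` (`true` iff `α_i` is odd, iff `a_{ii} = 0`). -/
def par (P : SimpleRootSystem m n) (i : Fin (m + n)) : Bool := P.τ i != P.τ (i + 1)

/-- The reflection `s_{α_i}` on simple root systems: on the weight arrangement it
swaps the weights at positions `i` and `i+1`.  For `α_i` even it preserves `Π`;
for `α_i` odd it is the odd reflection `Π ↦ Π₁`. -/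
def reflect (P : SimpleRootSystem m n) (i : Fin (m + n)) : SimpleRootSystem m n where
  τ := P.τ ∘ Equiv.swap i (i + 1)
  card_delta := by
    have h1 : (Finset.univ.filter fun k => (P.τ ∘ Equiv.swap i (i + 1)) k = true).card
        = (Finset.univ.filter fun k => P.τ k = true).card :=
      Finset.card_equiv (Equiv.swap i (i + 1)) (fun k => by simp)
    rw [h1, P.card_delta]

/-- Applying a word of simple reflections to a simple root system. -/
def applyWord (P : SimpleRootSystem m n) : List (Fin (m + n)) → SimpleRootSystem m n
  | [] => P
  | c :: l => applyWord (P.reflect c) l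

/-- The word consists of even reflections at every stage (i.e. it represents an
element of the Weyl group, generated by even reflections). -/
def IsEvenWord (P : SimpleRootSystem m n) : List (Fin (m + n)) → Prop
  | [] => True
  | c :: l => P.par c = false ∧ IsEvenWord (P.reflect c) l

end SimpleRootSystem

end ASY

namespace ASY

/-- Generators of the minimalistic affine super Yangian: `x^±_{α_i,r}`, `h_{α_i,r}`
with `i ∈ I` and `r ∈ {0,1}`. -/
inductive MGen (N : ℕ) : Type
  | xp (i : Fin N) (r : Fin 2)
  | xm (i : Fin N) (r : Fin 2)
  | h (i : Fin N) (r : Fin 2)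

/-- The free algebra on the minimalistic generators. -/
abbrev MFree (m n : ℕ) : Type := FreeAlgebra R (MGen (m + n))

section MinDefs

variable {m n : ℕ}

/-- `x^+_{α_i,r}` in the free algebra. -/
def MXp (i : Fin (m + n)) (r : Fin 2) : MFree m n := FreeAlgebra.ι R (MGen.xp i r)

/-- `x^−_{α_i,r}` in the free algebra. -/
def MXm (i : Fin (m + n)) (r : Fin 2) : MFree m n := FreeAlgebra.ι R (MGen.xm i r)

/-- `h_{α_i,r}` in the free algebra. -/
def MH (i : Fin (m + n)) (r : Fin 2) : MFree m n := FreeAlgebra.ι R (MGen.h i r)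

/-- `h̃_{α_i,1} = h_{α_i,1} − (ℏ/2) h_{α_i,0}²` in the free algebra. -/
def MHt (i : Fin (m + n)) : MFree m n := MH i 1 - (half * hbar) • (MH i 0 * MH i 0)

variable [NeZero (m + n)]

/-- The defining relations of the minimalistic affine super Yangian `Y_ℏ(ŝl(m|n,Π))`. -/
inductive MRel (P : SimpleRootSystem m n) : MFree m n → MFree m n → Prop
  /-- `[h_{α_i,r}, h_{α_j,s}] = 0` -/
  | hh (i j : Fin (m + n)) (r s : Fin 2) :
      MRel P (sbr false false (MH i r) (MH j s)) 0
  /-- `[x^+_{α_i,0}, x^−_{α_j,0}] = δ_{ij} h_{α_i,0}` -/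
  | pm00 (i j : Fin (m + n)) :
      MRel P (sbr (P.par i) (P.par j) (MXp i 0) (MXm j 0)) (if i = j then MH i 0 else 0)
  /-- `[x^+_{α_i,1}, x^−_{α_j,0}] = δ_{ij} h_{α_i,1}` -/
  | pm10 (i j : Fin (m + n)) :
      MRel P (sbr (P.par i) (P.par j) (MXp i 1) (MXm j 0)) (if i = j then MH i 1 else 0)
  /-- `[x^+_{α_i,0}, x^−_{α_j,1}] = δ_{ij} h_{α_i,1}` -/
  | pm01 (i j : Fin (m + n)) :
      MRel P (sbr (P.par i) (P.par j) (MXp i 0) (MXm j 1)) (if i = j then MH i 1 else 0)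
  /-- `[h_{α_i,0}, x^+_{α_j,r}] = a_{ij} x^+_{α_j,r}` -/
  | hxp (i j : Fin (m + n)) (r : Fin 2) :
      MRel P (sbr false (P.par j) (MH i 0) (MXp j r)) (((P.a i j : ℤ) : R) • MXp j r)
  /-- `[h_{α_i,0}, x^−_{α_j,r}] = −a_{ij} x^−_{α_j,r}` -/
  | hxm (i j : Fin (m + n)) (r : Fin 2) :
      MRel P (sbr false (P.par j) (MH i 0) (MXm j r)) ((-(P.a i j : ℤ) : R) • MXm j r)
  /-- `[x^+_{α_i,1},x^+_{α_j,0}] − [x^+_{α_i,0},x^+_{α_j,1}] = (ℏ a_{ij}/2){x^+_{α_i,0},x^+_{α_j,0}}` -/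
  | mixp (i j : Fin (m + n)) :
      MRel P (sbr (P.par i) (P.par j) (MXp i 1) (MXp j 0)
          - sbr (P.par i) (P.par j) (MXp i 0) (MXp j 1))
        ((half * hbar * ((P.a i j : ℤ) : R)) • sac (P.par i) (P.par j) (MXp i 0) (MXp j 0))
  /-- `[x^−_{α_i,1},x^−_{α_j,0}] − [x^−_{α_i,0},x^−_{α_j,1}] = −(ℏ a_{ij}/2){x^−_{α_i,0},x^−_{α_j,0}}` -/
  | mixm (i j : Fin (m + n)) :
      MRel P (sbr (P.par i) (P.par j) (MXm i 1) (MXm j 0)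
          - sbr (P.par i) (P.par j) (MXm i 0) (MXm j 1))
        ((-(half * hbar * ((P.a i j : ℤ) : R))) • sac (P.par i) (P.par j) (MXm i 0) (MXm j 0))
  /-- `[h̃_{α_i,1}, x^+_{α_j,0}] = a_{ij} x^+_{α_j,1}` -/
  | htxp (i j : Fin (m + n)) :
      MRel P (sbr false (P.par j) (MHt i) (MXp j 0)) (((P.a i j : ℤ) : R) • MXp j 1)
  /-- `[h̃_{α_i,1}, x^−_{α_j,0}] = −a_{ij} x^−_{α_j,1}` -/
  | htxm (i j : Fin (m + n)) :
      MRel P (sbr false (P.par j) (MHt i) (MXm j 0)) ((-(P.a i j : ℤ) : R) • MXm j 1)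
  /-- Serre relation `(ad x^+_{α_i,0})^{1+|a_{ij}|}(x^+_{α_j,0}) = 0`, `i ≠ j` -/
  | serrep (i j : Fin (m + n)) (hij : i ≠ j) :
      MRel P (adN (P.par i) (P.par j) (MXp i 0) (1 + (P.a i j).natAbs) (MXp j 0)) 0
  /-- Serre relation `(ad x^−_{α_i,0})^{1+|a_{ij}|}(x^−_{α_j,0}) = 0`, `i ≠ j` -/
  | serrem (i j : Fin (m + n)) (hij : i ≠ j) :
      MRel P (adN (P.par i) (P.par j) (MXm i 0) (1 + (P.a i j).natAbs) (MXm j 0)) 0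
  /-- `[x^+_{α_t,0}, x^+_{α_t,0}] = 0` for `α_t` odd -/
  | oddp (t : Fin (m + n)) (ht : P.par t = true) :
      MRel P (sbr true true (MXp t 0) (MXp t 0)) 0
  /-- `[x^−_{α_t,0}, x^−_{α_t,0}] = 0` for `α_t` odd -/
  | oddm (t : Fin (m + n)) (ht : P.par t = true) :
      MRel P (sbr true true (MXm t 0) (MXm t 0)) 0
  /-- `[[x^+_{α_{t−1},0},x^+_{α_t,0}],[x^+_{α_t,0},x^+_{α_{t+1},0}]] = 0` for `α_t` odd -/
  | oddSp (t : Fin (m + n)) (ht : P.par t = true) :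
      MRel P (sbr (xor (P.par (t - 1)) true) (xor true (P.par (t + 1)))
        (sbr (P.par (t - 1)) true (MXp (t - 1) 0) (MXp t 0))
        (sbr true (P.par (t + 1)) (MXp t 0) (MXp (t + 1) 0))) 0
  /-- `[[x^−_{α_{t−1},0},x^−_{α_t,0}],[x^−_{α_t,0},x^−_{α_{t+1},0}]] = 0` for `α_t` odd -/
  | oddSm (t : Fin (m + n)) (ht : P.par t = true) :
      MRel P (sbr (xor (P.par (t - 1)) true) (xor true (P.par (t + 1)))
        (sbr (P.par (t - 1)) true (MXm (t - 1) 0) (MXm t 0))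
        (sbr true (P.par (t + 1)) (MXm t 0) (MXm (t + 1) 0))) 0

/-- The minimalistic affine super Yangian `Y_ℏ(ŝl(m|n,Π))`, presented on the
generators `x^±_{α_i,r}`, `h_{α_i,r}` (`r ∈ {0,1}`) by the minimalistic relations. -/
abbrev Ymin (P : SimpleRootSystem m n) : Type := RingQuot (MRel P)

/-- The canonical projection from the free algebra onto `Y_ℏ(ŝl(m|n,Π))`. -/
def mkY (P : SimpleRootSystem m n) : MFree m n →ₐ[R] Ymin P := RingQuot.mkAlgHom R (MRel P)

/-- The generator `x^+_{α_i,r}` of `Y_ℏ(ŝl(m|n,Π))`. -/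
def xgp (P : SimpleRootSystem m n) (i : Fin (m + n)) (r : Fin 2) : Ymin P := mkY P (MXp i r)

/-- The generator `x^−_{α_i,r}` of `Y_ℏ(ŝl(m|n,Π))`. -/
def xgm (P : SimpleRootSystem m n) (i : Fin (m + n)) (r : Fin 2) : Ymin P := mkY P (MXm i r)

/-- The generator `h_{α_i,r}` of `Y_ℏ(ŝl(m|n,Π))`. -/
def hg (P : SimpleRootSystem m n) (i : Fin (m + n)) (r : Fin 2) : Ymin P := mkY P (MH i r)

/-- The element `h̃_{α_i,1} = h_{α_i,1} − (ℏ/2)h_{α_i,0}²` of `Y_ℏ(ŝl(m|n,Π))`. -/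
def htilY (P : SimpleRootSystem m n) (i : Fin (m + n)) : Ymin P := mkY P (MHt i)

/-- The scalar `a_{i+1,i}⁻¹ ∈ ℂ ⊆ ℂ[ℏ]`. -/
def acoef (P : SimpleRootSystem m n) (i : Fin (m + n)) : R :=
  Polynomial.C (((P.a (i + 1) i : ℤ) : ℂ)⁻¹)

/-- The recursively defined higher generators
`x^+_{α_i,r+1} := a_{i+1,i}⁻¹ [h̃_{α_{i+1},1}, x^+_{α_i,r}]` (`r ≥ 1`). -/
def xpn (P : SimpleRootSystem m n) (i : Fin (m + n)) : ℕ → Ymin P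
  | 0 => xgp P i 0
  | 1 => xgp P i 1
  | r + 2 => acoef P i • sbr false (P.par i) (htilY P (i + 1)) (xpn P i (r + 1))

/-- The recursively defined higher generators
`x^−_{α_i,r+1} := −a_{i+1,i}⁻¹ [h̃_{α_{i+1},1}, x^−_{α_i,r}]` (`r ≥ 1`). -/
def xmn (P : SimpleRootSystem m n) (i : Fin (m + n)) : ℕ → Ymin P
  | 0 => xgm P i 0
  | 1 => xgm P i 1
  | r + 2 => (-acoef P i) • sbr false (P.par i) (htilY P (i + 1)) (xmn P i (r + 1))

/-- The recursively defined higher Cartan generators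
`h_{α_i,r+1} := [x^+_{α_i,r+1}, x^−_{α_i,0}]` (`r ≥ 1`). -/
def hcn (P : SimpleRootSystem m n) (i : Fin (m + n)) : ℕ → Ymin P
  | 0 => hg P i 0
  | 1 => hg P i 1
  | r + 2 => sbr (P.par i) (P.par i) (xpn P i (r + 2)) (xmn P i 0)

end MinDefs

end ASY

namespace ASY

/-- Generators of the Drinfeld affine super Yangian: `x^±_{α_i,r}`, `h_{α_i,r}` with `r ∈ ℤ_{≥0}`. -/
inductive DGen (N : ℕ) : Type
  | xp (i : Fin N) (r : ℕ)
  | xm (i : Fin N) (r : ℕ)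
  | h (i : Fin N) (r : ℕ)

/-- The free algebra on the Drinfeld generators. -/
abbrev DFree (m n : ℕ) : Type := FreeAlgebra R (DGen (m + n))

section DrinDefs

variable {m n : ℕ}

/-- `x^+_{α_i,r}` in the free algebra. -/
def DXp (i : Fin (m + n)) (r : ℕ) : DFree m n := FreeAlgebra.ι R (DGen.xp i r)

/-- `x^−_{α_i,r}` in the free algebra. -/
def DXm (i : Fin (m + n)) (r : ℕ) : DFree m n := FreeAlgebra.ι R (DGen.xm i r)

/-- `h_{α_i,r}` in the free algebra. -/
def DH (i : Fin (m + n)) (r : ℕ) : DFree m n := FreeAlgebra.ι R (DGen.h i r)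

variable [NeZero (m + n)]

/-- The defining relations of the Drinfeld affine super Yangian `Y^D_ℏ(ŝl(m|n,Π))`. -/
inductive DRel (P : SimpleRootSystem m n) : DFree m n → DFree m n → Prop
  /-- `[h_{α_i,r}, h_{α_j,s}] = 0` -/
  | hh (i j : Fin (m + n)) (r s : ℕ) :
      DRel P (sbr false false (DH i r) (DH j s)) 0
  /-- `[h_{α_i,0}, x^+_{α_j,s}] = a_{ij} x^+_{α_j,s}` -/
  | hxp (i j : Fin (m + n)) (s : ℕ) :
      DRel P (sbr false (P.par j) (DH i 0) (DXp j s)) (((P.a i j : ℤ) : R) • DXp j s)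
  /-- `[h_{α_i,0}, x^−_{α_j,s}] = −a_{ij} x^−_{α_j,s}` -/
  | hxm (i j : Fin (m + n)) (s : ℕ) :
      DRel P (sbr false (P.par j) (DH i 0) (DXm j s)) ((-(P.a i j : ℤ) : R) • DXm j s)
  /-- `[x^+_{α_i,r}, x^−_{α_j,s}] = δ_{ij} h_{α_i,r+s}` -/
  | pm (i j : Fin (m + n)) (r s : ℕ) :
      DRel P (sbr (P.par i) (P.par j) (DXp i r) (DXm j s)) (if i = j then DH i (r + s) else 0)
  /-- `[h_{α_i,r+1},x^+_{α_j,s}] − [h_{α_i,r},x^+_{α_j,s+1}] = (ℏ a_{ij}/2){h_{α_i,r},x^+_{α_j,s}}` -/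
  | hmixp (i j : Fin (m + n)) (r s : ℕ) :
      DRel P (sbr false (P.par j) (DH i (r + 1)) (DXp j s)
          - sbr false (P.par j) (DH i r) (DXp j (s + 1)))
        ((half * hbar * ((P.a i j : ℤ) : R)) • sac false (P.par j) (DH i r) (DXp j s))
  /-- `[h_{α_i,r+1},x^−_{α_j,s}] − [h_{α_i,r},x^−_{α_j,s+1}] = −(ℏ a_{ij}/2){h_{α_i,r},x^−_{α_j,s}}` -/
  | hmixm (i j : Fin (m + n)) (r s : ℕ) :
      DRel P (sbr false (P.par j) (DH i (r + 1)) (DXm j s)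
          - sbr false (P.par j) (DH i r) (DXm j (s + 1)))
        ((-(half * hbar * ((P.a i j : ℤ) : R))) • sac false (P.par j) (DH i r) (DXm j s))
  /-- `[x^+_{α_i,r+1},x^+_{α_j,s}] − [x^+_{α_i,r},x^+_{α_j,s+1}] = (ℏ a_{ij}/2){x^+_{α_i,r},x^+_{α_j,s}}` -/
  | xmixp (i j : Fin (m + n)) (r s : ℕ) :
      DRel P (sbr (P.par i) (P.par j) (DXp i (r + 1)) (DXp j s)
          - sbr (P.par i) (P.par j) (DXp i r) (DXp j (s + 1)))
        ((half * hbar * ((P.a i j : ℤ) : R)) • sac (P.par i) (P.par j) (DXp i r) (DXp j s))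
  /-- `[x^−_{α_i,r+1},x^−_{α_j,s}] − [x^−_{α_i,r},x^−_{α_j,s+1}] = −(ℏ a_{ij}/2){x^−_{α_i,r},x^−_{α_j,s}}` -/
  | xmixm (i j : Fin (m + n)) (r s : ℕ) :
      DRel P (sbr (P.par i) (P.par j) (DXm i (r + 1)) (DXm j s)
          - sbr (P.par i) (P.par j) (DXm i r) (DXm j (s + 1)))
        ((-(half * hbar * ((P.a i j : ℤ) : R))) • sac (P.par i) (P.par j) (DXm i r) (DXm j s))
  /-- Serre relation `Σ_{σ ∈ S_k} [x^+_{α_i,r_{σ(1)}},[…,[x^+_{α_i,r_{σ(k)}},x^+_{α_j,s}]…]] = 0`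
  for `i ≠ j` and `k = 1 + |a_{ij}|` -/
  | serrep (i j : Fin (m + n)) (hij : i ≠ j)
      (rr : Fin (1 + (P.a i j).natAbs) → ℕ) (s : ℕ) :
      DRel P (∑ σ : Equiv.Perm (Fin (1 + (P.a i j).natAbs)),
        adSeq (P.par i) (P.par j) (List.ofFn fun t => DXp i (rr (σ t))) (DXp j s)) 0
  /-- Serre relation for the `x^−` generators -/
  | serrem (i j : Fin (m + n)) (hij : i ≠ j)
      (rr : Fin (1 + (P.a i j).natAbs) → ℕ) (s : ℕ) :
      DRel P (∑ σ : Equiv.Perm (Fin (1 + (P.a i j).natAbs)),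
        adSeq (P.par i) (P.par j) (List.ofFn fun t => DXm i (rr (σ t))) (DXm j s)) 0
  /-- `[x^+_{α_t,r}, x^+_{α_t,s}] = 0` for `α_t` odd -/
  | oddp (t : Fin (m + n)) (ht : P.par t = true) (r s : ℕ) :
      DRel P (sbr true true (DXp t r) (DXp t s)) 0
  /-- `[x^−_{α_t,r}, x^−_{α_t,s}] = 0` for `α_t` odd -/
  | oddm (t : Fin (m + n)) (ht : P.par t = true) (r s : ℕ) :
      DRel P (sbr true true (DXm t r) (DXm t s)) 0
  /-- `[[x^+_{α_{t−1},r},x^+_{α_t,0}],[x^+_{α_t,0},x^+_{α_{t+1},s}]] = 0` for `α_t` odd -/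
  | oddSp (t : Fin (m + n)) (ht : P.par t = true) (r s : ℕ) :
      DRel P (sbr (xor (P.par (t - 1)) true) (xor true (P.par (t + 1)))
        (sbr (P.par (t - 1)) true (DXp (t - 1) r) (DXp t 0))
        (sbr true (P.par (t + 1)) (DXp t 0) (DXp (t + 1) s))) 0
  /-- `[[x^−_{α_{t−1},r},x^−_{α_t,0}],[x^−_{α_t,0},x^−_{α_{t+1},s}]] = 0` for `α_t` odd -/
  | oddSm (t : Fin (m + n)) (ht : P.par t = true) (r s : ℕ) :
      DRel P (sbr (xor (P.par (t - 1)) true) (xor true (P.par (t + 1)))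
        (sbr (P.par (t - 1)) true (DXm (t - 1) r) (DXm t 0))
        (sbr true (P.par (t + 1)) (DXm t 0) (DXm (t + 1) s))) 0

/-- The Drinfeld affine super Yangian `Y^D_ℏ(ŝl(m|n,Π))`. -/
abbrev YD (P : SimpleRootSystem m n) : Type := RingQuot (DRel P)

/-- The canonical projection onto `Y^D_ℏ(ŝl(m|n,Π))`. -/
def mkD (P : SimpleRootSystem m n) : DFree m n →ₐ[R] YD P := RingQuot.mkAlgHom R (DRel P)

/-- The generator `x^+_{α_i,r}` of `Y^D_ℏ(ŝl(m|n,Π))`. -/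
def xdp (P : SimpleRootSystem m n) (i : Fin (m + n)) (r : ℕ) : YD P := mkD P (DXp i r)

/-- The generator `x^−_{α_i,r}` of `Y^D_ℏ(ŝl(m|n,Π))`. -/
def xdm (P : SimpleRootSystem m n) (i : Fin (m + n)) (r : ℕ) : YD P := mkD P (DXm i r)

/-- The generator `h_{α_i,r}` of `Y^D_ℏ(ŝl(m|n,Π))`. -/
def hd (P : SimpleRootSystem m n) (i : Fin (m + n)) (r : ℕ) : YD P := mkD P (DH i r)

/-- An algebra isomorphism `Y_ℏ(ŝl(m|n,Π)) ≃ Y^D_ℏ(ŝl(m|n,Π))` matches the generators if it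
sends each generator `x^±_{α_i,r}`, `h_{α_i,r}` (`r ∈ {0,1}`) of the minimalistic presentation
to the Drinfeld generator of the same name. -/
def MatchesGenerators (P : SimpleRootSystem m n) (E : Ymin P ≃ₐ[R] YD P) : Prop :=
  ∀ (i : Fin (m + n)) (r : Fin 2),
    E (xgp P i r) = xdp P i r.val ∧ E (xgm P i r) = xdm P i r.val ∧ E (hg P i r) = hd P i r.val

end DrinDefs

end ASY

/-!
Commutation with `h̃_{k,1}` multiplies the loop parameter of `x^±_i` by `±a_{ki}`. On a cycle with
at least five nodes, for any `i ≠ j` there is a neighbour `k` of `i` for which this operator moves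
`x_i` but not `x_j`, so relations between different nodes propagate from loop index zero to all loop
indices.

For `[x^+_{i,r}, x^-_{i,s}] = h_{i,r+s}`, induct on the level `p = r + s`. The defect
`D_i = [x^+_{i,r+1}, x^-_{i,s}] - [x^+_{i,r}, x^-_{i,s+1}]` depends only on `p`, and computing
`[h_{i,p}, h_{j,1}]` for adjacent `i`, `j` in two ways gives `D_i = -p D_j`. Hence
`(p² - 1) D_i = 0`, which settles `p ≥ 2`; the case `p = 1` is `[h_{i,1}, h_{j,1}] = 0`.

A corrected `h_{k,2}` shifts loop indices by two. In two variables the resulting multiplications by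
the power sums `p₁`, `p₂` generate all symmetric polynomials over `ℂ`, which propagates the
relations at a single node and the Serre relations.

In both algebras the currents are determined by the generators with `r = 0` and the `h̃_{k,1}`,
so the two homomorphisms matching generators are mutually inverse.
-/

namespace ASY

/-! ### Super brackets -/

section SuperBracket

variable {A B : Type*} [Ring A] [Algebra R A] [Ring B] [Algebra R B]

lemma sg_comm (p q : Bool) : sg p q = sg q p := by simp [sg, Bool.and_comm]

lemma sg_mul_self (p q : Bool) : sg p q * sg p q = 1 := by
  unfold sg; split <;> simp

/-- The inner derivation `x ↦ t x − x t`, that is, the super-adjoint action of an even element. -/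
def ad (t : A) : Module.End R A := LinearMap.mulLeft R t - LinearMap.mulRight R t

lemma ad_apply (t x : A) : ad t x = t * x - x * t := by simp [ad]

lemma sbr_false_left (p : Bool) (t x : A) : sbr false p t x = ad t x := by
  simp [sbr, sg, ad_apply]

lemma sac_false_left (p : Bool) (t x : A) : sac false p t x = t * x + x * t := by
  simp [sac, sg]

lemma ad_mul (t x y : A) : ad t (x * y) = ad t x * y + x * ad t y := by
  simp only [ad_apply]; noncomm_ring

lemma ad_sbr (t : A) (p q : Bool) (x y : A) :
    ad t (sbr p q x y) = sbr p q (ad t x) y + sbr p q x (ad t y) := by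
  simp only [sbr, map_sub, map_smul, ad_mul]; module

lemma ad_sac (t : A) (p q : Bool) (x y : A) :
    ad t (sac p q x y) = sac p q (ad t x) y + sac p q x (ad t y) := by
  simp only [sac, map_add, map_smul, ad_mul]; module

section Bilinear

variable (p q : Bool) (x x' y y' : A) (c : R)

lemma sbr_add_left : sbr p q (x + x') y = sbr p q x y + sbr p q x' y := by
  simp only [sbr, add_mul, mul_add]; module

lemma sbr_add_right : sbr p q x (y + y') = sbr p q x y + sbr p q x y' := by
  simp only [sbr, add_mul, mul_add]; module

lemma sbr_sub_left : sbr p q (x - x') y = sbr p q x y - sbr p q x' y := by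
  simp only [sbr, sub_mul, mul_sub]; module

lemma sbr_smul_left : sbr p q (c • x) y = c • sbr p q x y := by
  simp only [sbr, smul_mul_assoc, mul_smul_comm]; module

lemma sbr_smul_right : sbr p q x (c • y) = c • sbr p q x y := by
  simp only [sbr, smul_mul_assoc, mul_smul_comm]; module

lemma sbr_zero_left : sbr p q 0 y = 0 := by simp [sbr]

lemma sbr_zero_right : sbr p q x 0 = 0 := by simp [sbr]

lemma sac_add_left : sac p q (x + x') y = sac p q x y + sac p q x' y := by
  simp only [sac, add_mul, mul_add]; module

lemma sac_add_right : sac p q x (y + y') = sac p q x y + sac p q x y' := by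
  simp only [sac, add_mul, mul_add]; module

lemma sac_smul_left : sac p q (c • x) y = c • sac p q x y := by
  simp only [sac, smul_mul_assoc, mul_smul_comm]; module

lemma sac_smul_right : sac p q x (c • y) = c • sac p q x y := by
  simp only [sac, smul_mul_assoc, mul_smul_comm]; module

lemma sac_zero_left : sac p q 0 y = 0 := by simp [sac]

lemma sac_zero_right : sac p q x 0 = 0 := by simp [sac]

end Bilinear

lemma sbr_swap (p q : Bool) (x y : A) : sbr p q x y = -sg p q • sbr q p y x := by
  have h : sg p q • sg p q • (x * y) = x * y := by rw [smul_smul, sg_mul_self, one_smul]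
  simp only [sbr, sg_comm q p, smul_sub, neg_smul, h]; abel

lemma adSeq_replicate (p q : Bool) (x y : A) (k : ℕ) :
    adSeq p q (List.replicate k x) y = adN p q x k y := by
  induction k with
  | zero => rfl
  | succ k ih => rw [List.replicate_succ, adSeq, adN, ih, List.length_replicate]

section Map

variable (f : A →ₐ[R] B) (p q : Bool) (x y : A)

lemma map_ad : f (ad x y) = ad (f x) (f y) := by simp [ad_apply]

lemma map_sbr : f (sbr p q x y) = sbr p q (f x) (f y) := by simp [sbr]

lemma map_sac : f (sac p q x y) = sac p q (f x) (f y) := by simp [sac]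

lemma map_adN (k : ℕ) : f (adN p q x k y) = adN p q (f x) k (f y) := by
  induction k with
  | zero => rfl
  | succ k ih => rw [adN, adN, map_sbr, ih]

lemma map_adSeq (l : List A) : f (adSeq p q l y) = adSeq p q (l.map f) (f y) := by
  induction l with
  | nil => rfl
  | cons z l ih => rw [List.map_cons, adSeq, adSeq, map_sbr, ih, List.length_map]

end Map

end SuperBracket

/-! ### Propagating relations along the loop indices -/

section Shift

variable {S M : Type*} [CommRing S] [AddCommGroup M] [Module S M]

lemma eq_zero_of_shift {Z : ℕ → M} {D : Module.End S M} {d : S} (hd : IsUnit d)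
    (hD : ∀ r, D (Z r) = d • Z (r + 1)) (h0 : Z 0 = 0) (r : ℕ) : Z r = 0 := by
  induction r with
  | zero => exact h0
  | succ r ih => rw [← hd.smul_eq_zero, ← hD, ih, map_zero]

lemma eq_zero_of_shift₂ {Z : ℕ → ℕ → M} {D D' : Module.End S M} {d d' : S} (hd : IsUnit d)
    (hd' : IsUnit d') (hD : ∀ r s, D (Z r s) = d • Z (r + 1) s)
    (hD' : ∀ r s, D' (Z r s) = d' • Z r (s + 1)) (h00 : Z 0 0 = 0) (r s : ℕ) : Z r s = 0 :=
  eq_zero_of_shift hd' (hD' r) (eq_zero_of_shift (Z := (Z · 0)) hd (hD · 0) h00 r) s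

lemma eq_zero_of_add_self_eq_zero (h2 : IsUnit (2 : S)) {x : M} (h : x + x = 0) : x = 0 :=
  h2.smul_eq_zero.1 ((two_smul S x).trans h)

/-- `D` and `D'` act on the indices by the power sums `p₁` and, up to a scalar correction, `p₂`;
since these generate the symmetric polynomials in two variables, every `Z r s` is reached from
`Z 0 0`. -/
lemma eq_zero_of_powerSum_shift (h2 : IsUnit (2 : S)) {Z : ℕ → ℕ → M} {D D' : Module.End S M}
    {d d' κ : S} (hd : IsUnit d) (hd' : IsUnit d')
    (hD : ∀ r s, D (Z r s) = d • (Z (r + 1) s + Z r (s + 1)))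
    (hD' : ∀ r s, D' (Z r s) = d' • (Z (r + 2) s + Z r (s + 2)) + κ • Z r s)
    (hsymm : Z 1 0 = Z 0 1) (h00 : Z 0 0 = 0) : ∀ r s, Z r s = 0 := by
  suffices ∀ k r s, r + s = k → Z r s = 0 from fun r s => this _ r s rfl
  have p₁ {r s : ℕ} (h : Z r s = 0) : Z (r + 1) s + Z r (s + 1) = 0 := by
    rw [← hd.smul_eq_zero, ← hD, h, map_zero]
  have p₂ {r s : ℕ} (h : Z r s = 0) : Z (r + 2) s + Z r (s + 2) = 0 := by
    have := hD' r s
    rwa [h, map_zero, smul_zero, add_zero, eq_comm, hd'.smul_eq_zero] at this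
  intro k
  induction k using Nat.strong_induction_on with
  | _ k ih =>
    have one_step : ∀ r, ∀ s, r + s = k → Z 0 k = 0 → Z r s = 0 := by
      intro r
      induction r with
      | zero => rintro s rfl h; simpa using h
      | succ r ihr =>
        intro s hrs h
        have := p₁ (ih (r + s) (by omega) r s rfl)
        rwa [ihr (s + 1) (by omega) h, add_zero] at this
    refine fun r s hrs => one_step r s hrs ?_
    match k with
    | 0 => exact h00
    | 1 => exact eq_zero_of_add_self_eq_zero h2 (by simpa [hsymm] using p₁ h00)
    | k + 2 =>
      have h₂ := p₂ (ih k (by omega) 0 k (by omega))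
      have h₁ := p₁ (ih (k + 1) (by omega) 0 (k + 1) (by omega))
      have h₁' := p₁ (ih (k + 1) (by omega) 1 k (by omega))
      refine eq_zero_of_add_self_eq_zero h2 ?_
      calc Z 0 (k + 2) + Z 0 (k + 2)
          = (Z (0 + 2) k + Z 0 (k + 2)) + (Z (0 + 1) (k + 1) + Z 0 (k + 1 + 1))
            - (Z (1 + 1) k + Z 1 (k + 1)) := by simp only [zero_add, Nat.reduceAdd]; abel
        _ = 0 := by rw [h₂, h₁, h₁', add_zero, sub_zero]

end Shift

/-! ### The action of Cartan currents on root currents -/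

section CartanCurrents

variable {A : Type*} [Ring A] [Algebra R A]

/-- The current `h` acts on the root current `x` with weight `a`, where the relation raising the
loop index of `h` is only required up to `h_L`. The truncation matters because the relations of
level `p` enter an induction on `p`. -/
structure CartanAction (L : ℕ) (a : R) (h x : ℕ → A) : Prop where
  zero : ∀ s, ad (h 0) (x s) = a • x s
  succ : ∀ r s, r < L →
    ad (h (r + 1)) (x s) - ad (h r) (x (s + 1)) = (half * hbar * a) • (h r * x s + x s * h r)

section Identities

variable (p q : Bool) (h x y : A)

lemma sbr_anticomm_sub : sbr p q (h * x + x * h) y - sbr p q x (h * y + y * h)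
    = ad h (sac p q x y) := by
  simp only [sbr, sac, ad_apply, mul_add, add_mul, mul_smul_comm, smul_mul_assoc, mul_assoc]
  module

lemma sac_anticomm_sub : sac p q (h * x + x * h) y - sac p q x (h * y + y * h)
    = ad h (sbr p q x y) := by
  simp only [sbr, sac, ad_apply, mul_add, add_mul, mul_sub, sub_mul, mul_smul_comm, smul_mul_assoc,
    mul_assoc]
  module

lemma sac_ad_add_sbr_anticomm : sac p q (ad h x) y + sbr p q x (h * y + y * h)
    = h * sbr p q x y + sbr p q x y * h := by
  simp only [sbr, sac, ad_apply, mul_add, add_mul, mul_sub, sub_mul, mul_smul_comm, smul_mul_assoc,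
    mul_assoc]
  module

end Identities

namespace CartanAction

variable {L M : ℕ} {a : R} {h x y : ℕ → A} {p q : Bool}

lemma ad_succ (hx : CartanAction L a h x) {r : ℕ} (hr : r < L) (s : ℕ) :
    ad (h (r + 1)) (x s)
      = ad (h r) (x (s + 1)) + (half * hbar * a) • (h r * x s + x s * h r) :=
  sub_eq_iff_eq_add'.1 (hx.succ r s hr)

lemma sbr_eq_of_level
    (hlevel : ∀ r s, r + s < M → sbr p q (x (r + 1)) (y s) = sbr p q (x r) (y (s + 1))) :
    ∀ n r s, n + r + s ≤ M → sbr p q (x (r + n)) (y s) = sbr p q (x r) (y (s + n)) := by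
  intro n
  induction n with
  | zero => intros; rfl
  | succ n ih =>
    intro r s hM
    rw [← Nat.add_assoc, hlevel (r + n) s (by omega), ih r (s + 1) (by omega), Nat.add_right_comm,
      Nat.add_assoc s]

/-- How the double brackets `[x_r, [h_n, y_s]]` change when a unit of loop index moves from `y`
to `x`, corrected by the term with the anticommutator `{x_r, y_s}`. -/
def transfer (p q : Bool) (a : R) (h x y : ℕ → A) (n r s : ℕ) : A :=
  sbr p q (x (r + 1)) (ad (h n) (y s)) - sbr p q (x r) (ad (h n) (y (s + 1)))
    - (half * hbar * a) • ad (h n) (sac p q (x r) (y s))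

lemma transfer_zero (hx : CartanAction L a h x) (hy : CartanAction L (-a) h y) (r s : ℕ) :
    transfer p q a h x y 0 r s
      = a • (sbr p q (x r) (y (s + 1)) - sbr p q (x (r + 1)) (y s)) := by
  simp only [transfer, ad_sac, hx.zero, hy.zero, sac_smul_left, sac_smul_right, sbr_smul_right]
  module

lemma transfer_succ (hx : CartanAction L a h x) (hy : CartanAction L (-a) h y) {n : ℕ}
    (hn : n < L) (r s : ℕ) :
    transfer p q a h x y (n + 1) r s = transfer p q a h x y n r (s + 1)
      - (half * hbar * a) • (h n * sbr p q (x (r + 1)) (y s) + sbr p q (x (r + 1)) (y s) * h n)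
      + (half * hbar * a) • (h n * sbr p q (x r) (y (s + 1)) + sbr p q (x r) (y (s + 1)) * h n)
      - (half * hbar * a) ^ 2 • ad (h n) (sbr p q (x r) (y s)) := by
  simp only [transfer, ad_sac, hx.ad_succ hn, hy.ad_succ hn, sbr_add_right, sac_add_left,
    sac_add_right, sbr_smul_right, sac_smul_left, sac_smul_right, ← sac_anticomm_sub,
    ← sac_ad_add_sbr_anticomm]
  module

lemma ad_succ_sbr (hx : CartanAction L a h x) (hy : CartanAction L (-a) h y) {n : ℕ}
    (hn : n < L) (r s : ℕ) :
    ad (h (n + 1)) (sbr p q (x r) (y s))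
      = ad (h n) (sbr p q (x (r + 1)) (y s)) - transfer p q a h x y n r s := by
  simp only [transfer, ad_sbr, hx.ad_succ hn, hy.ad_succ hn, sbr_add_left, sbr_add_right,
    sbr_smul_left, sbr_smul_right, ← sbr_anticomm_sub]
  module

lemma ad_sbr_and_transfer (hx : CartanAction L a h x) (hy : CartanAction L (-a) h y)
    (hlevel : ∀ r s, r + s < M → sbr p q (x (r + 1)) (y s) = sbr p q (x r) (y (s + 1))) :
    ∀ n ≤ L,
      (∀ r s, n + r + s ≤ M + 1 → ad (h n) (sbr p q (x r) (y s))
        = a • (sbr p q (x (r + n)) (y s) - sbr p q (x r) (y (s + n)))) ∧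
      ∀ r s, n + r + s ≤ M → transfer p q a h x y n r s
        = a • (sbr p q (x r) (y (s + 1 + n)) - sbr p q (x (r + 1)) (y (s + n))) := by
  intro n
  induction n with
  | zero =>
    refine fun _ => ⟨fun r s _ => ?_, fun r s _ => transfer_zero hx hy r s⟩
    rw [ad_sbr, hx.zero, hy.zero, sbr_smul_left, sbr_smul_right]
    module
  | succ n ih =>
    intro hn
    obtain ⟨ad_sbr_n, transfer_n⟩ := ih (by omega)
    refine ⟨fun r s hM => ?_, fun r s hM => ?_⟩
    · rw [ad_succ_sbr hx hy hn, ad_sbr_n (r + 1) s (by omega), transfer_n r s (by omega),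
        Nat.add_right_comm r 1, Nat.add_right_comm s 1]
      module
    · have commutes : ad (h n) (sbr p q (x r) (y s)) = 0 := by
        rw [ad_sbr_n r s (by omega), sbr_eq_of_level hlevel n r s (by omega), sub_self, smul_zero]
      rw [transfer_succ hx hy hn, transfer_n r (s + 1) (by omega), hlevel r s (by omega), commutes,
        smul_zero, sub_zero, sub_add_cancel, show s + 1 + (n + 1) = s + 1 + 1 + n by omega,
        show s + (n + 1) = s + 1 + n by omega]

lemma ad_sbr_eq (hx : CartanAction L a h x) (hy : CartanAction L (-a) h y)
    (hlevel : ∀ r s, r + s < M → sbr p q (x (r + 1)) (y s) = sbr p q (x r) (y (s + 1)))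
    {n r s : ℕ} (hn : n ≤ L) (hM : n + r + s ≤ M + 1) :
    ad (h n) (sbr p q (x r) (y s))
      = a • (sbr p q (x (r + n)) (y s) - sbr p q (x r) (y (s + n))) :=
  (ad_sbr_and_transfer hx hy hlevel n hn).1 r s hM

lemma ad_sbr_eq_zero (hx : CartanAction L a h x) (hy : CartanAction L (-a) h y)
    (hlevel : ∀ r s, r + s < M → sbr p q (x (r + 1)) (y s) = sbr p q (x r) (y (s + 1)))
    {n r s : ℕ} (hn : n ≤ L) (hM : n + r + s ≤ M) : ad (h n) (sbr p q (x r) (y s)) = 0 := by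
  rw [ad_sbr_eq hx hy hlevel hn (by omega), sbr_eq_of_level hlevel n r s hM, sub_self, smul_zero]

end CartanAction

end CartanCurrents

lemma isUnit_natCast {k : ℕ} (hk : k ≠ 0) : IsUnit (k : R) := by
  simpa using (IsUnit.mk0 (k : ℂ) (by exact_mod_cast hk)).map (Polynomial.C : ℂ →+* R)

lemma isUnit_two : IsUnit (2 : R) := by exact_mod_cast isUnit_natCast two_ne_zero

section CartanCurrents

variable {A : Type*} [Ring A] [Algebra R A]

/-- The logarithmic Cartan element `h̃₁ = h₁ − (ℏ/2) h₀²`. -/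
def logCartan (h : ℕ → A) : A := h 1 - (half * hbar) • (h 0 * h 0)

/-- Three times the second logarithmic Cartan element `h̃₂ = h₂ − ℏ h₀ h₁ + (ℏ²/3) h₀³`. -/
def logCartanTwo (h : ℕ → A) : A :=
  (3 : R) • h 2 - (6 * (half * hbar)) • (h 0 * h 1) + (4 * (half * hbar) ^ 2) • (h 0 * h 0 * h 0)

section AdLinear

lemma ad_sub_left (t u x : A) : ad (t - u) x = ad t x - ad u x := by
  simp only [ad_apply, sub_mul, mul_sub]; abel

lemma ad_add_left (t u x : A) : ad (t + u) x = ad t x + ad u x := by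
  simp only [ad_apply, add_mul, mul_add]; abel

lemma ad_smul_left (c : R) (t x : A) : ad (c • t) x = c • ad t x := by
  simp only [ad_apply, smul_mul_assoc, mul_smul_comm, smul_sub]

lemma ad_mul_left (t u x : A) : ad (t * u) x = t * ad u x + ad t x * u := by
  simp only [ad_apply, mul_sub, sub_mul, mul_assoc]; abel

end AdLinear

namespace CartanAction

variable {L : ℕ} {a : R} {h x : ℕ → A}

lemma ad_logCartan (hx : CartanAction L a h x) (hL : 1 ≤ L) (s : ℕ) :
    ad (logCartan h) (x s) = a • x (s + 1) := by
  simp only [logCartan, ad_sub_left, ad_smul_left, ad_mul_left, hx.zero, hx.ad_succ hL,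
    mul_smul_comm, smul_mul_assoc]
  module

lemma ad_logCartanTwo (hx : CartanAction L a h x) (hL : 2 ≤ L) (s : ℕ) :
    ad (logCartanTwo h) (x s) = (3 * a) • x (s + 2) + ((half * hbar) ^ 2 * a ^ 3) • x s := by
  have commute_zero (t : ℕ) (z : A) : h 0 * (x t * z) = x t * (h 0 * z) + a • (x t * z) := by
    rw [← smul_mul_assoc, ← hx.zero, ad_apply]; noncomm_ring
  have commute_zero' (t : ℕ) : h 0 * x t = x t * h 0 + a • x t := by
    simpa using commute_zero t 1
  have commute_one (t : ℕ) : h 1 * x t = x t * h 1 + ad (h 1) (x t) := by rw [ad_apply]; abel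
  simp only [logCartanTwo, ad_add_left, ad_sub_left, ad_smul_left, ad_mul_left, hx.zero,
    hx.ad_succ (r := 1) hL, hx.ad_succ (r := 0) (by omega : 0 < L), commute_zero, commute_zero',
    commute_one, mul_smul_comm, smul_mul_assoc, mul_add, smul_add, mul_assoc]
  module

end CartanAction

section RootCurrentPairing

variable {pj pi : Bool} {u v w : A}

lemma mul_sbr_add_of_right_eq_zero (κ : R) (hwv : sbr pi pj w v = 0) :
    sbr pj pj u v * w + κ • (w * sbr pj pj u v)
      = sg pj pi • sbr (xor pj pi) pj (u * w + (κ * sg pj pi) • (w * u)) v := by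
  have swap : w * v = sg pi pj • (v * w) := sub_eq_zero.1 hwv
  have swap' (t : A) : w * (v * t) = sg pi pj • (v * (w * t)) := by
    rw [← mul_assoc, swap, smul_mul_assoc, mul_assoc]
  have sg_sq : sg pi pj * sg pi pj = 1 := sg_mul_self pi pj
  have sg_xor : sg (xor pj pi) pj = sg pj pj * sg pi pj := by cases pj <;> cases pi <;> simp [sg]
  simp only [sbr, mul_sub, sub_mul, mul_add, add_mul, mul_assoc, smul_mul_assoc, mul_smul_comm,
    swap, swap', sg_xor, sg_comm pj pi]
  match_scalars <;> grind

lemma ad_sub_ad_of_pairing {a e : R} {h h' u' w' : A} (hh : h = e • sbr pj pj u v)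
    (hh' : h' = e • sbr pj pj u' v) (hwv : sbr pi pj w v = 0) (hwv' : sbr pi pj w' v = 0)
    (huw : sbr pj pi u' w - sbr pj pi u w' = a • sac pj pi u w) :
    ad h' w - ad h w' = a • (h * w + w * h) := by
  have ad_pairing {u w : A} (hwv : sbr pi pj w v = 0) :
      ad (sbr pj pj u v) w = sg pj pi • sbr (xor pj pi) pj (sbr pj pi u w) v := by
    simpa [ad_apply, sbr, sub_eq_add_neg] using mul_sbr_add_of_right_eq_zero (u := u) (-1) hwv
  have anticomm_pairing : sbr pj pj u v * w + w * sbr pj pj u v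
      = sg pj pi • sbr (xor pj pi) pj (sac pj pi u w) v := by
    simpa only [sac, one_smul, one_mul] using mul_sbr_add_of_right_eq_zero (u := u) 1 hwv
  rw [hh, hh', ad_smul_left, ad_smul_left, ad_pairing hwv, ad_pairing hwv', smul_mul_assoc,
    mul_smul_comm, ← smul_add, anticomm_pairing, ← smul_sub, ← smul_sub, ← sbr_sub_left, huw,
    sbr_smul_left, smul_comm a, smul_comm a]

variable {a : R} {h x y w : ℕ → A}

lemma cartanAction_of_left (hh : ∀ r, h r = sbr pj pj (x r) (y 0))
    (hwy : ∀ s, sbr pi pj (w s) (y 0) = 0)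
    (hxw : ∀ r s, sbr pj pi (x (r + 1)) (w s) - sbr pj pi (x r) (w (s + 1))
      = (half * hbar * a) • sac pj pi (x r) (w s))
    (h0 : ∀ s, ad (h 0) (w s) = a • w s) (L : ℕ) : CartanAction L a h w where
  zero := h0
  succ r s _ := ad_sub_ad_of_pairing (e := 1) (by rw [one_smul, hh]) (by rw [one_smul, hh])
    (hwy s) (hwy (s + 1)) (hxw r s)

lemma cartanAction_of_right {L : ℕ} (hh : ∀ r, h r = sbr pj pj (x r) (y 0))
    (hh' : ∀ r < L, h (r + 1) = sbr pj pj (x r) (y 1))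
    (hxw : ∀ r s, sbr pj pi (x r) (w s) = 0)
    (hyw : ∀ s, sbr pj pi (y 1) (w s) - sbr pj pi (y 0) (w (s + 1))
      = (half * hbar * a) • sac pj pi (y 0) (w s))
    (h0 : ∀ s, ad (h 0) (w s) = a • w s) : CartanAction L a h w where
  zero := h0
  succ r s hr := by
    have hwx s : sbr pi pj (w s) (x r) = 0 := by rw [sbr_swap, hxw, smul_zero]
    exact ad_sub_ad_of_pairing ((hh r).trans (sbr_swap ..)) ((hh' r hr).trans (sbr_swap ..))
      (hwx s) (hwx (s + 1)) (hyw s)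

end RootCurrentPairing

section SameNode

lemma eq_zero_of_skew {Q : ℕ → ℕ → A} (hQ : ∀ r s t, Q (r + t) s + Q (s + t) r = 0) (r s : ℕ) :
    Q r s = 0 := by
  have right_zero (k : ℕ) : Q k 0 = 0 :=
    eq_zero_of_add_self_eq_zero isUnit_two (by simpa using hQ 0 0 k)
  simpa [right_zero] using hQ 0 s r

variable {h x u : ℕ → A}

lemma ad_succ_of_pairing_even {e c : R} (he : IsUnit e)
    (hu : ∀ r t, sbr false false (u t) (x r) = e • h (r + t))
    (hx : ∀ r s, sbr false false (x (r + 1)) (x s) - sbr false false (x r) (x (s + 1))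
      = c • sac false false (x r) (x s)) (r s : ℕ) :
    ad (h (r + 1)) (x s) - ad (h r) (x (s + 1)) = c • (h r * x s + x s * h r) := by
  suffices ∀ r s, ad (h (r + 1)) (x s) - ad (h r) (x (s + 1)) - c • (h r * x s + x s * h r) = 0
    from sub_eq_zero.1 (this r s)
  refine eq_zero_of_skew fun r s t => he.smul_eq_zero.1 ?_
  simp only [sbr_false_left] at hu
  have ad_hx := congrArg (ad (u t)) (hx r s)
  simp only [map_sub, map_smul, ad_sbr, ad_sac, hu, sbr_smul_left, sbr_smul_right, sac_smul_left,
    sac_smul_right, add_right_comm _ 1 t] at ad_hx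
  simp only [sbr_false_left, sac_false_left, ad_apply] at ad_hx ⊢
  linear_combination (norm := module) ad_hx

lemma ad_eq_zero_of_pairing_odd {e : R} (he : IsUnit e)
    (hu : ∀ r t, sbr true true (u t) (x r) = e • h (r + t))
    (hx : ∀ r s, sbr true true (x r) (x s) = 0) : ∀ r s, ad (h r) (x s) = 0 := by
  refine eq_zero_of_skew (Q := fun r s => ad (h r) (x s)) fun r s t => he.smul_eq_zero.1 ?_
  have sbr_odd (v w : A) : sbr true true v w = v * w + w * v := by simp [sbr, sg]
  calc e • (ad (h (r + t)) (x s) + ad (h (s + t)) (x r))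
      = ad (u t) (sbr true true (x r) (x s)) := by
        rw [smul_add, ← ad_smul_left, ← ad_smul_left, ← hu, ← hu]
        simp only [sbr_odd, ad_apply]; noncomm_ring
    _ = 0 := by rw [hx, map_zero]

end SameNode

end CartanCurrents

/-! ### The Cartan matrix -/

namespace SimpleRootSystem

variable {m n : ℕ} (P : SimpleRootSystem m n)

lemma isUnit_w (k : Fin (m + n)) : IsUnit (P.w k) := by
  unfold w; split_ifs <;> simp

variable [NeZero (m + n)]

lemma a_comm (i j : Fin (m + n)) : P.a i j = P.a j i := by
  simp only [a, mul_right_comm]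

lemma a_eq (i j : Fin (m + n)) : P.a i j
    = P.w i * ((if i = j then 1 else 0) - (if i = j + 1 then 1 else 0))
      - P.w (i + 1) * ((if i + 1 = j then 1 else 0) - (if i = j then 1 else 0)) := by
  rw [a_comm]
  simp only [a, coeffα, mul_sub, Finset.sum_sub_distrib, mul_ite, mul_one,
    mul_zero, Finset.sum_ite_eq', Finset.mem_univ, if_true, add_left_inj]

lemma nsmul_one_ne_zero {d : ℕ} (hd : 0 < d) (hdN : d < m + n) : d • (1 : Fin (m + n)) ≠ 0 := by
  have val_nsmul_one (k : ℕ) : (k • (1 : Fin (m + n))).val = k % (m + n) := by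
    induction k with
    | zero => simp
    | succ k ih => simp [succ_nsmul, Fin.val_add, ih]
  intro h
  have := val_nsmul_one d
  rw [h, Fin.val_zero, Nat.mod_eq_of_lt hdN] at this
  omega

lemma ne_of_sub_eq_nsmul_one {i j : Fin (m + n)} {d : ℕ} (hd : 0 < d) (hdN : d < m + n)
    (h : j - i = d • 1) : j ≠ i :=
  sub_ne_zero.1 (h ▸ nsmul_one_ne_zero hd hdN)

lemma add_one_ne_self (hN : 2 ≤ m + n) (i : Fin (m + n)) : i + 1 ≠ i :=
  ne_of_sub_eq_nsmul_one one_pos hN (by abel)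

lemma a_eq_zero_of_ne {i j : Fin (m + n)} (h : j ≠ i) (hsucc : j ≠ i + 1) (hpred : i ≠ j + 1) :
    P.a i j = 0 := by
  simp [a_eq, h.symm, hsucc.symm, hpred]

lemma a_eq_zero_of_sub_eq_nsmul_one {i j : Fin (m + n)} {d : ℕ} (hd : 2 ≤ d)
    (hdN : d + 2 ≤ m + n) (h : j - i = d • 1) : P.a i j = 0 := by
  obtain ⟨d, rfl⟩ := Nat.exists_eq_add_of_le' hd
  refine P.a_eq_zero_of_ne (ne_of_sub_eq_nsmul_one (d := d + 2) (by omega) (by omega) h)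
    (ne_of_sub_eq_nsmul_one (d := d + 1) (by omega) (by omega) ?_)
    (ne_of_sub_eq_nsmul_one (d := d + 3) (by omega) (by omega) ?_).symm
  · rw [← sub_sub, h, sub_eq_iff_eq_add, ← succ_nsmul]
  · rw [add_sub_right_comm, h, ← succ_nsmul]

lemma isUnit_a_succ (hN : 3 ≤ m + n) (i : Fin (m + n)) : IsUnit (P.a i (i + 1)) := by
  have ne_one : i ≠ i + 1 := (add_one_ne_self (by omega) i).symm
  have ne_two : i ≠ i + 1 + 1 :=
    (ne_of_sub_eq_nsmul_one (d := 2) (by omega) (by omega) (by abel)).symm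
  rw [a_eq, if_neg ne_one, if_neg ne_two, if_pos rfl]
  simpa using P.isUnit_w (i + 1)

lemma isUnit_a_succ_left (hN : 3 ≤ m + n) (i : Fin (m + n)) : IsUnit (P.a (i + 1) i) :=
  P.a_comm i (i + 1) ▸ P.isUnit_a_succ hN i

lemma isUnit_a_pred_left (hN : 3 ≤ m + n) (i : Fin (m + n)) : IsUnit (P.a (i - 1) i) := by
  simpa using P.isUnit_a_succ hN (i - 1)

lemma a_self_of_odd (hN : 2 ≤ m + n) {i : Fin (m + n)} (hi : P.par i = true) : P.a i i = 0 := by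
  have ne_one := add_one_ne_self hN i
  rw [par, bne_iff_ne] at hi
  rw [a_eq, if_pos rfl, if_neg ne_one, if_neg ne_one.symm, w, w]
  cases h : P.τ i <;> cases h' : P.τ (i + 1) <;> simp_all

lemma a_eq_zero_or_isUnit (hN : 3 ≤ m + n) {i j : Fin (m + n)} (hij : i ≠ j) :
    P.a i j = 0 ∨ IsUnit (P.a i j) := by
  by_cases hsucc : j = i + 1
  · exact .inr (hsucc ▸ P.isUnit_a_succ hN i)
  by_cases hpred : i = j + 1
  · exact .inr (hpred ▸ P.isUnit_a_succ_left hN j)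
  exact .inl (P.a_eq_zero_of_ne hij.symm hsucc hpred)

/-- This is where the Dynkin cycle must have at least five nodes. -/
lemma exists_adjacent_separating (hN : 5 ≤ m + n) {i j : Fin (m + n)} (hij : i ≠ j) :
    ∃ k, k ≠ i ∧ k ≠ j ∧ IsUnit (P.a k i) ∧ P.a k j = 0 := by
  by_cases h : ∃ d, 1 ≤ d ∧ d ≤ 2 ∧ j - i = d • 1
  · obtain ⟨d, hd, hd', h⟩ := h
    have hsub : j - (i - 1) = (d + 1) • 1 := by rw [succ_nsmul, ← h]; abel
    exact ⟨i - 1, (ne_of_sub_eq_nsmul_one one_pos (by omega) (by abel)).symm,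
      (ne_of_sub_eq_nsmul_one (by omega) (by omega) hsub).symm,
      P.isUnit_a_pred_left (by omega) i, P.a_eq_zero_of_sub_eq_nsmul_one (by omega) (by omega) hsub⟩
  · have not_succ : j ≠ i + 1 := fun e => h ⟨1, le_rfl, by simp, by rw [e]; abel⟩
    have not_succ_succ : j ≠ i + 1 + 1 := fun e => h ⟨2, by simp, le_rfl, by rw [e]; abel⟩
    exact ⟨i + 1, add_one_ne_self (by omega) i, not_succ.symm, P.isUnit_a_succ_left (by omega) i,
      P.a_eq_zero_of_ne not_succ not_succ_succ fun e => hij (add_right_cancel e)⟩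

/-- The weight `σ a_{ij} ∈ ℂ[ℏ]` with which the Cartan elements of the node `i` act on the root
current `x^σ_{α_j}` of sign `σ = ±1`. -/
def coef (σ : ℤˣ) (i j : Fin (m + n)) : R := ((σ * P.a i j : ℤ) : R)

lemma coef_one (i j : Fin (m + n)) : P.coef 1 i j = ((P.a i j : ℤ) : R) := by simp [coef]

lemma coef_neg_one (i j : Fin (m + n)) : P.coef (-1) i j = -((P.a i j : ℤ) : R) := by simp [coef]

lemma coef_neg (σ : ℤˣ) (i j : Fin (m + n)) : P.coef (-σ) i j = -P.coef σ i j := by simp [coef]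

variable {P}

lemma coef_eq_zero {i j : Fin (m + n)} (h : P.a i j = 0) (σ : ℤˣ) : P.coef σ i j = 0 := by
  simp [coef, h]

lemma isUnit_coef {i j : Fin (m + n)} (h : IsUnit (P.a i j)) (σ : ℤˣ) : IsUnit (P.coef σ i j) :=
  (σ.isUnit.mul h).map (Int.castRingHom R)

lemma isUnit_three_mul_coef {i j : Fin (m + n)} (h : IsUnit (P.a i j)) (σ : ℤˣ) :
    IsUnit (3 * P.coef σ i j) :=
  (by exact_mod_cast isUnit_natCast three_ne_zero : IsUnit (3 : R)).mul (P.isUnit_coef h σ)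

end SimpleRootSystem

/-! ### Root currents of one sign -/

section RootCurrents

variable {A : Type*} [Ring A] [Algebra R A] {m n : ℕ} [NeZero (m + n)]

/-- The defect of the relation between `[x_{i,r+1}, x_{j,s}]` and `[x_{i,r}, x_{j,s+1}]`. -/
def mixed (P : SimpleRootSystem m n) (σ : ℤˣ) (X : Fin (m + n) → ℕ → A) (i j : Fin (m + n))
    (r s : ℕ) : A :=
  sbr (P.par i) (P.par j) (X i (r + 1)) (X j s) - sbr (P.par i) (P.par j) (X i r) (X j (s + 1))
    - (half * hbar * P.coef σ i j) • sac (P.par i) (P.par j) (X i r) (X j s)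

/-- The quartic expression `[[x_{i-1,r}, x_{i,0}], [x_{i,0}, x_{i+1,s}]]` at an odd node `i`. -/
def quartic (P : SimpleRootSystem m n) (X : Fin (m + n) → ℕ → A) (i : Fin (m + n)) (r s : ℕ) : A :=
  sbr (xor (P.par (i - 1)) true) (xor true (P.par (i + 1)))
    (sbr (P.par (i - 1)) true (X (i - 1) r) (X i 0))
    (sbr true (P.par (i + 1)) (X i 0) (X (i + 1) s))

/-- The quadratic Serre expression `[x, [x', y]] + [x', [x, y]]`. -/
def quadSerre (p q : Bool) (x x' y : A) : A :=
  sbr p (xor q p) x (sbr p q x' y) + sbr p (xor q p) x' (sbr p q x y)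

/-- Root currents `X = x^σ` of one sign `σ = ±1` satisfying the relations among themselves at the
lowest loop indices only, together with elements `t i` raising the loop index by one. -/
structure RootCurrents (P : SimpleRootSystem m n) (σ : ℤˣ) (X : Fin (m + n) → ℕ → A)
    (t : Fin (m + n) → A) : Prop where
  shift : ∀ i j s, ad (t i) (X j s) = P.coef σ i j • X j (s + 1)
  mixed_zero : ∀ i j, mixed P σ X i j 0 0 = 0
  serre : ∀ i j, i ≠ j → adN (P.par i) (P.par j) (X i 0) (1 + (P.a i j).natAbs) (X j 0) = 0
  odd : ∀ i, P.par i = true → sbr true true (X i 0) (X i 0) = 0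
  quartic_zero : ∀ i, P.par i = true → quartic P X i 0 0 = 0

/-- The elements `u k` raise by two, up to a scalar correction, the loop index of the root
currents of the nodes other than `k`. -/
def ShiftsTwo (P : SimpleRootSystem m n) (σ : ℤˣ) (X : Fin (m + n) → ℕ → A)
    (u : Fin (m + n) → A) : Prop :=
  ∀ k i, k ≠ i → ∀ s, ad (u k) (X i s)
    = (3 * P.coef σ k i) • X i (s + 2) + ((half * hbar) ^ 2 * P.coef σ k i ^ 3) • X i s

namespace RootCurrents

variable {P : SimpleRootSystem m n} {σ : ℤˣ} {X : Fin (m + n) → ℕ → A} {t u : Fin (m + n) → A}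

lemma shift_eq_zero (hX : RootCurrents P σ X t) {i j : Fin (m + n)} (h : P.a i j = 0) (s : ℕ) :
    ad (t i) (X j s) = 0 := by
  rw [hX.shift, P.coef_eq_zero h, zero_smul]

lemma mixed_eq_zero_of_ne (hX : RootCurrents P σ X t) (hN : 5 ≤ m + n) {i j : Fin (m + n)}
    (hij : i ≠ j) (r s : ℕ) : mixed P σ X i j r s = 0 := by
  obtain ⟨k, -, -, hki, hkj⟩ := P.exists_adjacent_separating hN hij
  obtain ⟨l, -, -, hlj, hli⟩ := P.exists_adjacent_separating hN hij.symm
  refine eq_zero_of_shift₂ (D := ad (t k)) (D' := ad (t l)) (P.isUnit_coef hki σ)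
    (P.isUnit_coef hlj σ) (fun r s => ?_) (fun r s => ?_) (hX.mixed_zero i j) r s
  · simp only [mixed, map_sub, map_smul, ad_sbr, ad_sac, hX.shift_eq_zero hkj, hX.shift k i,
      sbr_smul_left, sac_smul_left, sbr_zero_right, sac_zero_right]
    module
  · simp only [mixed, map_sub, map_smul, ad_sbr, ad_sac, hX.shift_eq_zero hli, hX.shift l j,
      sbr_smul_right, sac_smul_right, sbr_zero_left, sac_zero_left]
    module

lemma sbr_eq_zero_of_a_eq_zero (hX : RootCurrents P σ X t) (hN : 5 ≤ m + n) {i j : Fin (m + n)}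
    (hij : i ≠ j) (ha : P.a i j = 0) (r s : ℕ) :
    sbr (P.par i) (P.par j) (X i r) (X j s) = 0 := by
  obtain ⟨k, -, -, hki, hkj⟩ := P.exists_adjacent_separating hN hij
  obtain ⟨l, -, -, hlj, hli⟩ := P.exists_adjacent_separating hN hij.symm
  refine eq_zero_of_shift₂ (Z := fun r s => sbr (P.par i) (P.par j) (X i r) (X j s))
    (D := ad (t k)) (D' := ad (t l)) (P.isUnit_coef hki σ) (P.isUnit_coef hlj σ)
    (fun r s => ?_) (fun r s => ?_) (by simpa [ha, adN] using hX.serre i j hij) r s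
  · rw [ad_sbr, hX.shift_eq_zero hkj, hX.shift k i, sbr_smul_left, sbr_zero_right, add_zero]
  · rw [ad_sbr, hX.shift_eq_zero hli, hX.shift l j, sbr_smul_right, sbr_zero_left, zero_add]

lemma quartic_eq_zero (hX : RootCurrents P σ X t) (hN : 5 ≤ m + n) {i : Fin (m + n)}
    (hi : P.par i = true) (r s : ℕ) : quartic P X i r s = 0 := by
  have left_mid : P.a (i - 1 - 1) i = 0 :=
    P.a_eq_zero_of_sub_eq_nsmul_one le_rfl (by omega) (by abel)
  have left_right : P.a (i - 1 - 1) (i + 1) = 0 :=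
    P.a_eq_zero_of_sub_eq_nsmul_one (d := 3) (by omega) hN (by abel)
  have right_mid : P.a (i + 1 + 1) i = 0 := by
    rw [P.a_comm]; exact P.a_eq_zero_of_sub_eq_nsmul_one le_rfl (by omega) (by abel)
  have right_left : P.a (i + 1 + 1) (i - 1) = 0 := by
    rw [P.a_comm]; exact P.a_eq_zero_of_sub_eq_nsmul_one (d := 3) (by omega) hN (by abel)
  refine eq_zero_of_shift₂ (D := ad (t (i - 1 - 1))) (D' := ad (t (i + 1 + 1)))
    (P.isUnit_coef (P.isUnit_a_pred_left (by omega) (i - 1)) σ)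
    (P.isUnit_coef (P.isUnit_a_succ_left (by omega) (i + 1)) σ)
    (fun r s => ?_) (fun r s => ?_) (hX.quartic_zero i hi) r s
  · simp only [quartic, ad_sbr, hX.shift_eq_zero left_mid, hX.shift_eq_zero left_right,
      hX.shift _ (i - 1), sbr_smul_left, sbr_zero_right, sbr_zero_left, add_zero]
  · simp only [quartic, ad_sbr, hX.shift_eq_zero right_mid, hX.shift_eq_zero right_left,
      hX.shift _ (i + 1), sbr_smul_right, sbr_zero_right, sbr_zero_left, zero_add]

lemma sbr_self_eq_zero_of_odd (hX : RootCurrents P σ X t) (hu : ShiftsTwo P σ X u)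
    (hN : 5 ≤ m + n) {i : Fin (m + n)} (hi : P.par i = true) :
    ∀ r s, sbr true true (X i r) (X i s) = 0 := by
  have hk : IsUnit (P.a (i + 1) i) := P.isUnit_a_succ_left (by omega) i
  have hne : i + 1 ≠ i := SimpleRootSystem.add_one_ne_self (by omega) i
  refine eq_zero_of_powerSum_shift isUnit_two (Z := fun r s => sbr true true (X i r) (X i s))
    (D := ad (t (i + 1))) (D' := ad (u (i + 1)))
    (κ := 2 * ((half * hbar) ^ 2 * P.coef σ (i + 1) i ^ 3)) (P.isUnit_coef hk σ)
    (P.isUnit_three_mul_coef hk σ) (fun r s => ?_) (fun r s => ?_) ?_ (hX.odd i hi)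
  · simp only [ad_sbr, hX.shift, sbr_smul_left, sbr_smul_right]
    module
  · simp only [ad_sbr, hu _ _ hne, sbr_smul_left, sbr_smul_right, sbr_add_left, sbr_add_right]
    module
  · rw [sbr_swap]; simp [sg]

lemma mixed_self_eq_zero_of_even (hX : RootCurrents P σ X t) (hu : ShiftsTwo P σ X u)
    (hN : 5 ≤ m + n) {i : Fin (m + n)} (hi : P.par i = false) :
    ∀ r s, mixed P σ X i i r s = 0 := by
  have hk : IsUnit (P.a (i + 1) i) := P.isUnit_a_succ_left (by omega) i
  have hne : i + 1 ≠ i := SimpleRootSystem.add_one_ne_self (by omega) i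
  refine eq_zero_of_powerSum_shift isUnit_two (D := ad (t (i + 1))) (D' := ad (u (i + 1)))
    (κ := 2 * ((half * hbar) ^ 2 * P.coef σ (i + 1) i ^ 3)) (P.isUnit_coef hk σ)
    (P.isUnit_three_mul_coef hk σ) (fun r s => ?_) (fun r s => ?_) ?_ (hX.mixed_zero i i)
  · simp only [mixed, map_sub, map_smul, ad_sbr, ad_sac, hX.shift (i + 1), sbr_smul_left,
      sbr_smul_right, sac_smul_left, sac_smul_right]
    module
  · simp only [mixed, map_sub, map_smul, ad_sbr, ad_sac, hu _ _ hne, sbr_smul_left,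
      sbr_smul_right, sac_smul_left, sac_smul_right, sbr_add_left, sbr_add_right, sac_add_left,
      sac_add_right, add_right_comm _ 1 2]
    module
  · simp only [mixed, hi, sbr_false_left, sac_false_left, ad_apply, zero_add, add_comm 1]
    module

lemma mixed_eq_zero (hX : RootCurrents P σ X t) (hu : ShiftsTwo P σ X u) (hN : 5 ≤ m + n)
    (i j : Fin (m + n)) (r s : ℕ) : mixed P σ X i j r s = 0 := by
  by_cases hij : i = j
  · subst hij
    cases hi : P.par i with
    | false => exact hX.mixed_self_eq_zero_of_even hu hN hi r s
    | true => simp [mixed, hi, hX.sbr_self_eq_zero_of_odd hu hN hi,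
        P.coef_eq_zero (P.a_self_of_odd (by omega) hi)]
  · exact hX.mixed_eq_zero_of_ne hN hij r s

lemma quadSerre_zero (hX : RootCurrents P σ X t) {i j : Fin (m + n)} (hij : i ≠ j)
    (ha : IsUnit (P.a i j)) : quadSerre (P.par i) (P.par j) (X i 0) (X i 0) (X j 0) = 0 := by
  have h := hX.serre i j hij
  rw [Int.isUnit_iff_natAbs_eq.1 ha] at h
  have h' : sbr (P.par i) (xor (P.par j) (P.par i)) (X i 0)
      (sbr (P.par i) (P.par j) (X i 0) (X j 0)) = 0 := by simpa [adN] using h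
  rw [quadSerre, h', add_zero]

lemma quadSerre_eq_zero (hX : RootCurrents P σ X t) (hu : ShiftsTwo P σ X u) (hN : 5 ≤ m + n)
    {i j : Fin (m + n)} (hij : i ≠ j) (ha : IsUnit (P.a i j)) (r r' s : ℕ) :
    quadSerre (P.par i) (P.par j) (X i r) (X i r') (X j s) = 0 := by
  obtain ⟨k, hk, hk', hki, hkj⟩ := P.exists_adjacent_separating hN hij
  obtain ⟨l, -, -, hlj, hli⟩ := P.exists_adjacent_separating hN hij.symm
  have hukj s : ad (u k) (X j s) = 0 := by rw [hu k j hk', P.coef_eq_zero hkj]; simp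
  have right_index (s : ℕ) : quadSerre (P.par i) (P.par j) (X i 0) (X i 0) (X j s) = 0 := by
    refine eq_zero_of_shift
      (Z := fun s => quadSerre (P.par i) (P.par j) (X i 0) (X i 0) (X j s)) (D := ad (t l))
      (P.isUnit_coef hlj σ) (fun s => ?_) (hX.quadSerre_zero hij ha) s
    simp only [quadSerre, map_add, ad_sbr, hX.shift_eq_zero hli, hX.shift l j, sbr_smul_right,
      sbr_zero_left, zero_add, smul_add]
  refine eq_zero_of_powerSum_shift isUnit_two
    (Z := fun r r' => quadSerre (P.par i) (P.par j) (X i r) (X i r') (X j s))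
    (D := ad (t k)) (D' := ad (u k)) (κ := 2 * ((half * hbar) ^ 2 * P.coef σ k i ^ 3))
    (P.isUnit_coef hki σ) (P.isUnit_three_mul_coef hki σ) (fun r r' => ?_) (fun r r' => ?_)
    (add_comm _ _) (right_index s) r r'
  · simp only [quadSerre, map_add, ad_sbr, hX.shift_eq_zero hkj, hX.shift k i, sbr_smul_left,
      sbr_smul_right, sbr_zero_right, add_zero]
    module
  · simp only [quadSerre, map_add, ad_sbr, hukj, hu _ _ hk, sbr_smul_left, sbr_smul_right,
      sbr_add_left, sbr_add_right, sbr_zero_right, add_zero]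
    module

lemma serre_eq_zero (hX : RootCurrents P σ X t) (hu : ShiftsTwo P σ X u) (hN : 5 ≤ m + n)
    {i j : Fin (m + n)} (hij : i ≠ j) (rr : Fin (1 + (P.a i j).natAbs) → ℕ) (s : ℕ) :
    ∑ τ : Equiv.Perm (Fin (1 + (P.a i j).natAbs)),
      adSeq (P.par i) (P.par j) (List.ofFn fun k => X i (rr (τ k))) (X j s) = 0 := by
  have adj := P.a_eq_zero_or_isUnit (by omega) hij
  rw [Int.isUnit_iff_natAbs_eq] at adj
  generalize hk : 1 + (P.a i j).natAbs = k at rr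
  rcases adj with ha | ha
  · obtain rfl : k = 1 := by simp [← hk, ha]
    simpa [adSeq] using hX.sbr_eq_zero_of_a_eq_zero hN hij ha (rr 0) s
  · obtain rfl : k = 2 := by rw [← hk, ha]
    have perm_two : (Finset.univ : Finset (Equiv.Perm (Fin 2))) = {1, Equiv.swap 0 1} := by decide
    rw [perm_two, Finset.sum_pair (by decide)]
    simpa [adSeq, quadSerre] using
      hX.quadSerre_eq_zero hu hN hij (Int.isUnit_iff_natAbs_eq.2 ha) (rr 0) (rr 1) s

lemma cartanAction_self (hX : RootCurrents P σ X t) (hu : ShiftsTwo P σ X u) (hN : 5 ≤ m + n)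
    {i : Fin (m + n)} {h v : ℕ → A} {e : R} (he : IsUnit e)
    (hv : ∀ r s, sbr (P.par i) (P.par i) (v s) (X i r) = e • h (r + s))
    (h0 : ∀ s, ad (h 0) (X i s) = P.coef σ i i • X i s) (L : ℕ) :
    CartanAction L (P.coef σ i i) h (X i) where
  zero := h0
  succ r s _ := by
    cases hi : P.par i with
    | false =>
      have mixed_eq r s := sub_eq_zero.1 (hX.mixed_self_eq_zero_of_even hu hN hi r s)
      simp only [hi] at hv mixed_eq
      exact ad_succ_of_pairing_even he hv mixed_eq r s
    | true =>
      have ad_eq_zero := ad_eq_zero_of_pairing_odd he (by simpa only [hi] using hv)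
        (hX.sbr_self_eq_zero_of_odd hu hN hi)
      simp [ad_eq_zero, P.coef_eq_zero (P.a_self_of_odd (by omega) hi)]

end RootCurrents

end RootCurrents

/-! ### Currents generated by the minimalistic relations -/

section MinimalCurrents

variable {A : Type*} [Ring A] [Algebra R A] {m n : ℕ} [NeZero (m + n)]

/-- Currents `X = x⁺`, `Y = x⁻`, `H = h` that satisfy the relations of the minimalistic
presentation, which concern the loop indices `0` and `1` only, and whose higher terms are produced
from the first ones by `h̃_{α_i,1}`. -/
structure MinimalCurrents (P : SimpleRootSystem m n) (X Y H : Fin (m + n) → ℕ → A) : Prop where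
  pos : RootCurrents P 1 X fun i => logCartan (H i)
  neg : RootCurrents P (-1) Y fun i => logCartan (H i)
  weight_pos : ∀ i j s, ad (H i 0) (X j s) = P.coef 1 i j • X j s
  weight_neg : ∀ i j s, ad (H i 0) (Y j s) = P.coef (-1) i j • Y j s
  cartan_eq : ∀ i r, H i r = sbr (P.par i) (P.par i) (X i r) (Y i 0)
  cartan_one_eq : ∀ i, H i 1 = sbr (P.par i) (P.par i) (X i 0) (Y i 1)
  ad_cartan_one : ∀ i j, ad (H i 1) (H j 1) = 0
  pairing_zero : ∀ i j, i ≠ j → sbr (P.par i) (P.par j) (X i 0) (Y j 0) = 0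

/-- The relation `[x⁺_{α_i,r}, x⁻_{α_i,s}] = h_{α_i,r+s}` for `r + s ≤ p`. -/
def PairingUpTo (P : SimpleRootSystem m n) (X Y H : Fin (m + n) → ℕ → A) (p : ℕ) : Prop :=
  ∀ i r s, r + s ≤ p → sbr (P.par i) (P.par i) (X i r) (Y i s) = H i (r + s)

/-- The discrepancy `[x⁺_{α_i,p+1}, x⁻_{α_i,0}] − [x⁺_{α_i,p}, x⁻_{α_i,1}]`. -/
def pairingDefect (P : SimpleRootSystem m n) (X Y : Fin (m + n) → ℕ → A) (p : ℕ)
    (i : Fin (m + n)) : A :=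
  sbr (P.par i) (P.par i) (X i (p + 1)) (Y i 0) - sbr (P.par i) (P.par i) (X i p) (Y i 1)

namespace MinimalCurrents

variable {P : SimpleRootSystem m n} {X Y H : Fin (m + n) → ℕ → A}

lemma pairing_eq_zero (hC : MinimalCurrents P X Y H) (hN : 5 ≤ m + n) {i j : Fin (m + n)}
    (hij : i ≠ j) (r s : ℕ) : sbr (P.par i) (P.par j) (X i r) (Y j s) = 0 := by
  obtain ⟨k, -, -, hki, hkj⟩ := P.exists_adjacent_separating hN hij
  obtain ⟨l, -, -, hlj, hli⟩ := P.exists_adjacent_separating hN hij.symm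
  refine eq_zero_of_shift₂ (Z := fun r s => sbr (P.par i) (P.par j) (X i r) (Y j s))
    (D := ad (logCartan (H k))) (D' := ad (logCartan (H l))) (P.isUnit_coef hki 1)
    (P.isUnit_coef hlj (-1)) (fun r s => ?_) (fun r s => ?_) (hC.pairing_zero i j hij) r s
  · rw [ad_sbr, hC.neg.shift_eq_zero hkj, hC.pos.shift k i, sbr_smul_left, sbr_zero_right,
      add_zero]
  · rw [ad_sbr, hC.pos.shift_eq_zero hli, hC.neg.shift l j, sbr_smul_right, sbr_zero_left,
      zero_add]

lemma cartanAction_pos_of_ne (hC : MinimalCurrents P X Y H) (hN : 5 ≤ m + n) {i j : Fin (m + n)}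
    (hij : i ≠ j) (L : ℕ) : CartanAction L (P.coef 1 i j) (H i) (X j) :=
  cartanAction_of_left (hC.cartan_eq i) (fun s => hC.pairing_eq_zero hN hij.symm s 0)
    (fun r s => sub_eq_zero.1 (hC.pos.mixed_eq_zero_of_ne hN hij r s)) (hC.weight_pos i j) L

lemma cartanAction_neg_of_ne (hC : MinimalCurrents P X Y H) (hN : 5 ≤ m + n) {i j : Fin (m + n)}
    (hij : i ≠ j) {L : ℕ} (hL : PairingUpTo P X Y H L) :
    CartanAction L (P.coef (-1) i j) (H i) (Y j) :=
  cartanAction_of_right (hC.cartan_eq i) (fun r hr => (hL i r 1 hr).symm)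
    (fun r s => hC.pairing_eq_zero hN hij r s)
    (fun s => sub_eq_zero.1 (hC.neg.mixed_eq_zero_of_ne hN hij 0 s)) (hC.weight_neg i j)

lemma ad_cartan_zero (hC : MinimalCurrents P X Y H) (i j : Fin (m + n)) (r : ℕ) :
    ad (H i 0) (H j r) = 0 := by
  rw [hC.cartan_eq j r, ad_sbr, hC.weight_pos, hC.weight_neg, sbr_smul_left, sbr_smul_right,
    P.coef_neg]
  module

lemma ad_logCartan_cartan (hC : MinimalCurrents P X Y H) (i j : Fin (m + n)) (r : ℕ) :
    ad (logCartan (H i)) (H j r) = ad (H i 1) (H j r) := by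
  simp [logCartan, ad_sub_left, ad_smul_left, ad_mul_left, hC.ad_cartan_zero]

lemma ad_cartan_one_eq (hC : MinimalCurrents P X Y H) {p : ℕ} (hp : PairingUpTo P X Y H p)
    (i j : Fin (m + n)) {r s : ℕ} (hrs : r + s = p) :
    ad (H j 1) (H i p) = P.coef 1 j i •
      (sbr (P.par i) (P.par i) (X i (r + 1)) (Y i s)
        - sbr (P.par i) (P.par i) (X i r) (Y i (s + 1))) := by
  rw [← hC.ad_logCartan_cartan, ← hrs, ← hp i r s hrs.le, ad_sbr, hC.pos.shift j i,
    hC.neg.shift j i, sbr_smul_left, sbr_smul_right, P.coef_neg]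
  module

lemma pairing_sub_eq_pairingDefect (hC : MinimalCurrents P X Y H) (hN : 5 ≤ m + n) {p : ℕ}
    (hp : PairingUpTo P X Y H p) (i : Fin (m + n)) {r s : ℕ} (hrs : r + s = p) :
    sbr (P.par i) (P.par i) (X i (r + 1)) (Y i s) - sbr (P.par i) (P.par i) (X i r) (Y i (s + 1))
      = pairingDefect P X Y p i :=
  (P.isUnit_coef (P.isUnit_a_succ_left (by omega) i) 1).smul_left_cancel.1
    ((hC.ad_cartan_one_eq hp i (i + 1) hrs).symm.trans
      (hC.ad_cartan_one_eq hp i (i + 1) (add_zero p)))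

lemma pairing_sub_eq_smul_pairingDefect (hC : MinimalCurrents P X Y H) (hN : 5 ≤ m + n) {p : ℕ}
    (hp : PairingUpTo P X Y H p) (i : Fin (m + n)) : ∀ k r s, k + r + s = p + 1 →
    sbr (P.par i) (P.par i) (X i (r + k)) (Y i s) - sbr (P.par i) (P.par i) (X i r) (Y i (s + k))
      = (k : R) • pairingDefect P X Y p i := by
  intro k
  induction k with
  | zero => simp
  | succ k ih =>
    intro r s hk
    have lower := ih r (s + 1) (by omega)
    have top := hC.pairing_sub_eq_pairingDefect hN hp i (r := r + k) (s := s) (by omega)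
    rw [Nat.add_right_comm] at lower
    rw [Nat.cast_succ, add_smul, one_smul, ← lower, ← top, add_assoc r, add_assoc s,
      sub_add_sub_cancel']

/-- Both sides compute `[h_{α_i,p}, h_{α_j,1}]`, expanding one or the other argument as a bracket of
root currents. -/
lemma pairingDefect_eq (hC : MinimalCurrents P X Y H) (hN : 5 ≤ m + n) {p : ℕ}
    (hp : PairingUpTo P X Y H p) {i j : Fin (m + n)} (hij : i ≠ j) (ha : IsUnit (P.a i j)) :
    pairingDefect P X Y p i = -((p : R) • pairingDefect P X Y p j) := by
  have hx := hC.cartanAction_pos_of_ne hN hij p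
  have hy := hC.cartanAction_neg_of_ne hN hij hp
  rw [P.coef_neg] at hy
  have hlevel r s (hrs : r + s < p) :
      sbr (P.par j) (P.par j) (X j (r + 1)) (Y j s)
        = sbr (P.par j) (P.par j) (X j r) (Y j (s + 1)) := by
    rw [hp j _ _ (by omega), hp j _ _ (by omega), Nat.add_right_comm, Nat.add_assoc]
  have expand_right : ad (H i p) (H j 1) = P.coef 1 i j • (p : R) • pairingDefect P X Y p j := by
    rw [hC.cartan_eq j 1, hx.ad_sbr_eq hy hlevel le_rfl (by omega),
      hC.pairing_sub_eq_smul_pairingDefect hN hp j p 1 0 (by omega)]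
  have expand_left : ad (H j 1) (H i p) = P.coef 1 i j • pairingDefect P X Y p i := by
    rw [hC.ad_cartan_one_eq hp i j (add_zero p), pairingDefect, SimpleRootSystem.coef, P.a_comm,
      SimpleRootSystem.coef]
  refine (P.isUnit_coef ha 1).smul_left_cancel.1 ?_
  rw [← expand_left, smul_neg, ← expand_right, ad_apply, ad_apply, neg_sub]

/-- For `p ≥ 2` two adjacent nodes give `D_i = -p D_j` and `D_j = -p D_i`, hence
`(p² - 1) D_i = 0`. -/
lemma pairingDefect_eq_zero (hC : MinimalCurrents P X Y H) (hN : 5 ≤ m + n) {p : ℕ} (hp1 : 1 ≤ p)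
    (hp : PairingUpTo P X Y H p) (i : Fin (m + n)) : pairingDefect P X Y p i = 0 := by
  have hne : i + 1 ≠ i := SimpleRootSystem.add_one_ne_self (by omega) i
  have ha := P.isUnit_a_succ (by omega) i
  have ha' := P.isUnit_a_succ_left (by omega) i
  obtain rfl | hp2 : p = 1 ∨ 2 ≤ p := by omega
  · have h := hC.ad_cartan_one_eq hp i (i + 1) (add_zero 1)
    rw [hC.ad_cartan_one] at h
    exact (P.isUnit_coef ha' 1).smul_eq_zero.1 h.symm
  · have fixed : pairingDefect P X Y p i = ((p * p : ℕ) : R) • pairingDefect P X Y p i := by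
      conv_lhs => rw [hC.pairingDefect_eq hN hp hne.symm ha,
        hC.pairingDefect_eq hN hp hne ha', smul_neg, neg_neg, smul_smul, ← Nat.cast_mul]
    have hpp : 2 * 2 ≤ p * p := Nat.mul_le_mul hp2 hp2
    refine (isUnit_natCast (k := p * p - 1) (by omega)).smul_eq_zero.1 ?_
    rw [Nat.cast_sub (by omega), sub_smul, ← fixed, Nat.cast_one, one_smul, sub_self]

lemma pairingUpTo_succ (hC : MinimalCurrents P X Y H) (hN : 5 ≤ m + n) {p : ℕ} (hp1 : 1 ≤ p)
    (hp : PairingUpTo P X Y H p) : PairingUpTo P X Y H (p + 1) := by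
  intro i r s hrs
  rcases Nat.lt_or_ge (r + s) (p + 1) with h | h
  · exact hp i r s (by omega)
  · have := hC.pairing_sub_eq_smul_pairingDefect hN hp i s r 0 (by omega)
    rw [hC.pairingDefect_eq_zero hN hp1 hp, smul_zero, sub_eq_zero, zero_add] at this
    rw [← this, hC.cartan_eq]

lemma pairing_self (hC : MinimalCurrents P X Y H) (hN : 5 ≤ m + n) (i : Fin (m + n)) (r s : ℕ) :
    sbr (P.par i) (P.par i) (X i r) (Y i s) = H i (r + s) := by
  suffices ∀ p, PairingUpTo P X Y H (p + 1) from this (r + s) i r s (by omega)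
  intro p
  induction p with
  | zero =>
    intro i r s h
    obtain rfl | ⟨rfl, rfl⟩ : s = 0 ∨ r = 0 ∧ s = 1 := by omega
    · exact (hC.cartan_eq i r).symm
    · exact (hC.cartan_one_eq i).symm
  | succ p ih => exact hC.pairingUpTo_succ hN (by omega) ih

lemma pairingUpTo (hC : MinimalCurrents P X Y H) (hN : 5 ≤ m + n) (p : ℕ) :
    PairingUpTo P X Y H p :=
  fun i r s _ => hC.pairing_self hN i r s

lemma shiftsTwo_pos (hC : MinimalCurrents P X Y H) (hN : 5 ≤ m + n) :
    ShiftsTwo P 1 X fun k => logCartanTwo (H k) :=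
  fun _ _ hki => (hC.cartanAction_pos_of_ne hN hki 2).ad_logCartanTwo le_rfl

lemma shiftsTwo_neg (hC : MinimalCurrents P X Y H) (hN : 5 ≤ m + n) :
    ShiftsTwo P (-1) Y fun k => logCartanTwo (H k) :=
  fun _ _ hki => (hC.cartanAction_neg_of_ne hN hki (hC.pairingUpTo hN 2)).ad_logCartanTwo le_rfl

lemma cartanAction_pos (hC : MinimalCurrents P X Y H) (hN : 5 ≤ m + n) (i j : Fin (m + n))
    (L : ℕ) : CartanAction L (P.coef 1 i j) (H i) (X j) := by
  obtain rfl | hij := eq_or_ne i j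
  · refine hC.pos.cartanAction_self (hC.shiftsTwo_pos hN) hN (v := Y i)
      (e := -sg (P.par i) (P.par i)) ?_ (fun r s => ?_) (hC.weight_pos i i) L
    · exact (IsUnit.of_mul_eq_one _ (sg_mul_self _ _)).neg
    · rw [← hC.pairing_self hN, ← sbr_swap]
  · exact hC.cartanAction_pos_of_ne hN hij L

lemma cartanAction_neg (hC : MinimalCurrents P X Y H) (hN : 5 ≤ m + n) (i j : Fin (m + n))
    (L : ℕ) : CartanAction L (P.coef (-1) i j) (H i) (Y j) := by
  obtain rfl | hij := eq_or_ne i j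
  · refine hC.neg.cartanAction_self (hC.shiftsTwo_neg hN) hN (v := X i) isUnit_one
      (fun r s => ?_) (hC.weight_neg i i) L
    rw [hC.pairing_self hN, one_smul, add_comm]
  · exact hC.cartanAction_neg_of_ne hN hij (hC.pairingUpTo hN L)

lemma ad_cartan_eq_zero (hC : MinimalCurrents P X Y H) (hN : 5 ≤ m + n) (i j : Fin (m + n))
    (r s : ℕ) : ad (H i r) (H j s) = 0 := by
  have hy := hC.cartanAction_neg hN i j r
  rw [P.coef_neg] at hy
  rw [hC.cartan_eq j s]
  refine (hC.cartanAction_pos hN i j r).ad_sbr_eq_zero (M := r + s) hy (fun r s _ => ?_) le_rfl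
    le_rfl
  rw [hC.pairing_self hN, hC.pairing_self hN, Nat.add_right_comm, Nat.add_assoc]

end MinimalCurrents

end MinimalCurrents

/-! ### Currents and homomorphisms out of the free algebras -/

section IterCurrent

variable {A : Type*} [Ring A] [Algebra R A] {m n : ℕ} [NeZero (m + n)]
  {P : SimpleRootSystem m n} {σ : ℤˣ} {t x x₁ : Fin (m + n) → A}

/-- The current with term `x i` at loop index `0` on which `a_{i+1,i}⁻¹ [t_{i+1}, ·]`, up to the
sign `σ`, raises the loop index by one. -/
def iterCurrent (P : SimpleRootSystem m n) (σ : ℤˣ) (t x : Fin (m + n) → A) (i : Fin (m + n))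
    (r : ℕ) : A :=
  ((Ring.inverse (P.coef σ (i + 1) i) • ad (t (i + 1))) ^ r) (x i)

lemma iterCurrent_zero (i : Fin (m + n)) : iterCurrent P σ t x i 0 = x i := rfl

lemma iterCurrent_one (hN : 3 ≤ m + n) {i : Fin (m + n)} {z : A}
    (hz : ad (t (i + 1)) (x i) = P.coef σ (i + 1) i • z) : iterCurrent P σ t x i 1 = z := by
  rw [iterCurrent, pow_one, LinearMap.smul_apply, hz, smul_smul,
    Ring.inverse_mul_cancel _ (P.isUnit_coef (P.isUnit_a_succ_left hN i) σ), one_smul]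

lemma commute_ad {u v : A} (h : Commute u v) : Commute (ad u) (ad v) := by
  refine LinearMap.ext fun z => ?_
  simp only [Module.End.mul_apply, ad_apply, mul_sub, sub_mul, ← mul_assoc, h.eq]
  simp only [mul_assoc, h.eq]
  abel

lemma ad_iterCurrent {u : A} {j : Fin (m + n)} (hu : Commute u (t (j + 1))) {c : R} {k : ℕ}
    (h0 : ad u (x j) = c • iterCurrent P σ t x j k) (s : ℕ) :
    ad u (iterCurrent P σ t x j s) = c • iterCurrent P σ t x j (s + k) := by
  have h := ((commute_ad hu).smul_right (Ring.inverse (P.coef σ (j + 1) j))).pow_right s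
  rw [iterCurrent, ← Module.End.mul_apply, h.eq, Module.End.mul_apply, h0, map_smul, iterCurrent,
    iterCurrent, pow_add, Module.End.mul_apply]

lemma rootCurrents_iterCurrent (hN : 3 ≤ m + n) (ht : ∀ i j, Commute (t i) (t j))
    (hx : ∀ i j, ad (t i) (x j) = P.coef σ i j • x₁ j)
    (mixed : ∀ i j, sbr (P.par i) (P.par j) (x₁ i) (x j) - sbr (P.par i) (P.par j) (x i) (x₁ j)
      = (half * hbar * P.coef σ i j) • sac (P.par i) (P.par j) (x i) (x j))
    (serre : ∀ i j, i ≠ j → adN (P.par i) (P.par j) (x i) (1 + (P.a i j).natAbs) (x j) = 0)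
    (odd : ∀ i, P.par i = true → sbr true true (x i) (x i) = 0)
    (quartic : ∀ i, P.par i = true → quartic P (fun i _ => x i) i 0 0 = 0) :
    RootCurrents P σ (iterCurrent P σ t x) t where
  shift i j s := ad_iterCurrent (ht i (j + 1)) (by rw [hx, iterCurrent_one hN (hx _ _)]) s
  mixed_zero i j := by
    rw [ASY.mixed, zero_add, iterCurrent_one hN (hx _ _), iterCurrent_one hN (hx _ _)]
    exact sub_eq_zero.2 (mixed i j)
  serre := serre
  odd := odd
  quartic_zero := quartic

end IterCurrent

section MinimalisticRelations

variable {A : Type*} [Ring A] [Algebra R A] {m n : ℕ} {f : MFree m n →ₐ[R] A}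

lemma map_MHt (i : Fin (m + n)) :
    f (MHt i) = f (MH i 1) - (half * hbar) • (f (MH i 0) * f (MH i 0)) := by
  rw [MHt, map_sub, map_smul, map_mul]

variable [NeZero (m + n)] {P : SimpleRootSystem m n}

lemma commute_map_MH (hf : ∀ ⦃x y⦄, MRel P x y → f x = f y) (i j : Fin (m + n)) (r s : Fin 2) :
    Commute (f (MH i r)) (f (MH j s)) := by
  have h := hf (.hh i j r s)
  rwa [map_sbr, sbr_false_left, ad_apply, map_zero, sub_eq_zero] at h

lemma commute_map_MH_MHt (hf : ∀ ⦃x y⦄, MRel P x y → f x = f y) (i j : Fin (m + n)) (r : Fin 2) :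
    Commute (f (MH i r)) (f (MHt j)) := by
  have h := commute_map_MH hf i j r
  rw [map_MHt]
  exact (h 1).sub_right (((h 0).mul_right (h 0)).smul_right _)

lemma commute_map_MHt (hf : ∀ ⦃x y⦄, MRel P x y → f x = f y) (i j : Fin (m + n)) :
    Commute (f (MHt i)) (f (MHt j)) := by
  have h r := commute_map_MH_MHt hf i j r
  rw [map_MHt i]
  exact (h 1).sub_left (((h 0).mul_left (h 0)).smul_left _)

lemma ad_map_MHt_MXp (hf : ∀ ⦃x y⦄, MRel P x y → f x = f y) (i j : Fin (m + n)) :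
    ad (f (MHt i)) (f (MXp j 0)) = P.coef 1 i j • f (MXp j 1) := by
  have h := hf (.htxp i j)
  rwa [map_sbr, sbr_false_left, map_smul, ← P.coef_one] at h

lemma ad_map_MHt_MXm (hf : ∀ ⦃x y⦄, MRel P x y → f x = f y) (i j : Fin (m + n)) :
    ad (f (MHt i)) (f (MXm j 0)) = P.coef (-1) i j • f (MXm j 1) := by
  have h := hf (.htxm i j)
  rwa [map_sbr, sbr_false_left, map_smul, ← P.coef_neg_one] at h

lemma rootCurrents_map_MXp (hf : ∀ ⦃x y⦄, MRel P x y → f x = f y) (hN : 3 ≤ m + n) :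
    RootCurrents P 1 (iterCurrent P 1 (fun i => f (MHt i)) fun i => f (MXp i 0))
      fun i => f (MHt i) := by
  refine rootCurrents_iterCurrent (x₁ := fun i => f (MXp i 1)) hN (commute_map_MHt hf)
    (ad_map_MHt_MXp hf) (fun i j => ?_) (fun i j hij => ?_) (fun i hi => ?_) fun i hi => ?_
  · simpa [map_sbr, map_sac, P.coef_one] using hf (.mixp i j)
  · simpa [map_adN] using hf (.serrep i j hij)
  · simpa [map_sbr] using hf (.oddp i hi)
  · simpa [map_sbr, quartic] using hf (.oddSp i hi)

lemma rootCurrents_map_MXm (hf : ∀ ⦃x y⦄, MRel P x y → f x = f y) (hN : 3 ≤ m + n) :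
    RootCurrents P (-1) (iterCurrent P (-1) (fun i => f (MHt i)) fun i => f (MXm i 0))
      fun i => f (MHt i) := by
  refine rootCurrents_iterCurrent (x₁ := fun i => f (MXm i 1)) hN (commute_map_MHt hf)
    (ad_map_MHt_MXm hf) (fun i j => ?_) (fun i j hij => ?_) (fun i hi => ?_) fun i hi => ?_
  · simpa [map_sbr, map_sac, P.coef_neg_one] using hf (.mixm i j)
  · simpa [map_adN] using hf (.serrem i j hij)
  · simpa [map_sbr] using hf (.oddm i hi)
  · simpa [map_sbr, quartic] using hf (.oddSm i hi)

end MinimalisticRelations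

section Presentations

variable {A B : Type*} [Ring A] [Algebra R A] [Ring B] [Algebra R B] {m n : ℕ} [NeZero (m + n)]
  {P : SimpleRootSystem m n} {X Y H : Fin (m + n) → ℕ → A} {X' Y' H' : Fin (m + n) → ℕ → B}

lemma exists_minimalCurrents {f : MFree m n →ₐ[R] A} (hf : ∀ ⦃x y⦄, MRel P x y → f x = f y)
    (hN : 3 ≤ m + n) :
    ∃ X Y H : Fin (m + n) → ℕ → A, MinimalCurrents P X Y H ∧
      ∀ i (r : Fin 2), f (MXp i r) = X i r ∧ f (MXm i r) = Y i r ∧ f (MH i r) = H i r := by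
  let X := iterCurrent P 1 (fun i => f (MHt i)) fun i => f (MXp i 0)
  let Y := iterCurrent P (-1) (fun i => f (MHt i)) fun i => f (MXm i 0)
  let H i r := sbr (P.par i) (P.par i) (X i r) (Y i 0)
  have X_one i : X i 1 = f (MXp i 1) := iterCurrent_one hN (ad_map_MHt_MXp hf _ i)
  have Y_one i : Y i 1 = f (MXm i 1) := iterCurrent_one hN (ad_map_MHt_MXm hf _ i)
  have H_zero i : H i 0 = f (MH i 0) := by
    simpa [H, X, Y, iterCurrent_zero, map_sbr] using hf (.pm00 i i)
  have H_one i : H i 1 = f (MH i 1) := by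
    simpa [H, X_one, Y, iterCurrent_zero, map_sbr] using hf (.pm10 i i)
  have logCartan_H i : logCartan (H i) = f (MHt i) := by
    rw [map_MHt, logCartan, H_zero, H_one]
  have ad_MH_MXp i j : ad (f (MH i 0)) (f (MXp j 0)) = P.coef 1 i j • f (MXp j 0) := by
    have h := hf (.hxp i j 0)
    rwa [map_sbr, sbr_false_left, map_smul, ← P.coef_one] at h
  have ad_MH_MXm i j : ad (f (MH i 0)) (f (MXm j 0)) = P.coef (-1) i j • f (MXm j 0) := by
    have h := hf (.hxm i j 0)
    rwa [map_sbr, sbr_false_left, map_smul, ← P.coef_neg_one] at h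
  refine ⟨X, Y, H, ⟨?_, ?_, fun i j s => ?_, fun i j s => ?_, fun _ _ => rfl, fun i => ?_,
    fun i j => ?_, fun i j hij => ?_⟩, fun i r => ?_⟩
  · simpa only [logCartan_H] using rootCurrents_map_MXp hf hN
  · simpa only [logCartan_H] using rootCurrents_map_MXm hf hN
  · rw [H_zero]
    exact ad_iterCurrent (commute_map_MH_MHt hf i (j + 1) 0) (k := 0) (ad_MH_MXp i j) s
  · rw [H_zero]
    exact ad_iterCurrent (commute_map_MH_MHt hf i (j + 1) 0) (k := 0) (ad_MH_MXm i j) s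
  · rw [H_one, Y_one]
    simpa [X, iterCurrent_zero, map_sbr] using (hf (.pm01 i i)).symm
  · rw [H_one, H_one, ad_apply, sub_eq_zero]
    exact commute_map_MH hf i j 1 1
  · simpa [X, Y, iterCurrent_zero, map_sbr, hij] using hf (.pm00 i j)
  · match r with
    | 0 => exact ⟨rfl, rfl, (H_zero i).symm⟩
    | 1 => exact ⟨(X_one i).symm, (Y_one i).symm, (H_one i).symm⟩

namespace MinimalCurrents

lemma pairing (hC : MinimalCurrents P X Y H) (hN : 5 ≤ m + n) (i j : Fin (m + n)) (r s : ℕ) :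
    sbr (P.par i) (P.par j) (X i r) (Y j s) = if i = j then H i (r + s) else 0 := by
  split_ifs with hij
  · subst hij; exact hC.pairing_self hN i r s
  · exact hC.pairing_eq_zero hN hij r s

lemma map_eq_of_mrel (hC : MinimalCurrents P X Y H) (hN : 5 ≤ m + n) {f : MFree m n →ₐ[R] A}
    (hX : ∀ i (r : Fin 2), f (MXp i r) = X i r) (hY : ∀ i (r : Fin 2), f (MXm i r) = Y i r)
    (hH : ∀ i (r : Fin 2), f (MH i r) = H i r) {x y : MFree m n} (h : MRel P x y) : f x = f y := by
  have map_MHt_eq i : f (MHt i) = logCartan (H i) := by rw [map_MHt, hH, hH]; rfl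
  have pairing_map i j r s (u : MFree m n) (hu : f u = H i (r + s)) :
      sbr (P.par i) (P.par j) (X i r) (Y j s) = f (if i = j then u else 0) := by
    rw [hC.pairing hN, apply_ite f, hu, map_zero]
  cases h with
  | hh i j r s => rw [map_sbr, map_zero, hH, hH, sbr_false_left, hC.ad_cartan_eq_zero hN]
  | pm00 i j => simpa only [map_sbr, hX, hY, Fin.val_zero] using pairing_map i j 0 0 _ (hH i 0)
  | pm10 i j =>
    simpa only [map_sbr, hX, hY, Fin.val_zero, Fin.val_one] using pairing_map i j 1 0 _ (hH i 1)
  | pm01 i j =>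
    simpa only [map_sbr, hX, hY, Fin.val_zero, Fin.val_one] using pairing_map i j 0 1 _ (hH i 1)
  | hxp i j r =>
    rw [map_sbr, map_smul, hX, hH, sbr_false_left, ← P.coef_one]
    exact hC.weight_pos i j r
  | hxm i j r =>
    rw [map_sbr, map_smul, hY, hH, sbr_false_left, ← P.coef_neg_one]
    exact hC.weight_neg i j r
  | mixp i j =>
    simp only [map_sub, map_sbr, map_smul, map_sac, hX, ← P.coef_one]
    exact sub_eq_zero.1 (hC.pos.mixed_zero i j)
  | mixm i j =>
    simp only [map_sub, map_sbr, map_smul, map_sac, hY, ← mul_neg, ← P.coef_neg_one]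
    exact sub_eq_zero.1 (hC.neg.mixed_zero i j)
  | htxp i j =>
    rw [map_sbr, map_smul, hX, hX, map_MHt_eq, sbr_false_left, ← P.coef_one]
    exact hC.pos.shift i j 0
  | htxm i j =>
    rw [map_sbr, map_smul, hY, hY, map_MHt_eq, sbr_false_left, ← P.coef_neg_one]
    exact hC.neg.shift i j 0
  | serrep i j hij => simpa only [map_adN, map_zero, hX, Fin.val_zero] using hC.pos.serre i j hij
  | serrem i j hij => simpa only [map_adN, map_zero, hY, Fin.val_zero] using hC.neg.serre i j hij
  | oddp i hi => simpa only [map_sbr, map_zero, hX, Fin.val_zero] using hC.pos.odd i hi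
  | oddm i hi => simpa only [map_sbr, map_zero, hY, Fin.val_zero] using hC.neg.odd i hi
  | oddSp i hi =>
    simpa only [map_sbr, map_zero, hX, quartic, Fin.val_zero] using hC.pos.quartic_zero i hi
  | oddSm i hi =>
    simpa only [map_sbr, map_zero, hY, quartic, Fin.val_zero] using hC.neg.quartic_zero i hi

lemma map_eq_of_drel (hC : MinimalCurrents P X Y H) (hN : 5 ≤ m + n) {g : DFree m n →ₐ[R] A}
    (hX : ∀ i r, g (DXp i r) = X i r) (hY : ∀ i r, g (DXm i r) = Y i r)
    (hH : ∀ i r, g (DH i r) = H i r) {x y : DFree m n} (h : DRel P x y) : g x = g y := by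
  have shiftsTwo_pos := hC.shiftsTwo_pos hN
  have shiftsTwo_neg := hC.shiftsTwo_neg hN
  cases h with
  | hh i j r s => rw [map_sbr, map_zero, hH, hH, sbr_false_left, hC.ad_cartan_eq_zero hN]
  | hxp i j s => rw [map_sbr, map_smul, hH, hX, sbr_false_left, ← P.coef_one, hC.weight_pos]
  | hxm i j s => rw [map_sbr, map_smul, hH, hY, sbr_false_left, ← P.coef_neg_one, hC.weight_neg]
  | pm i j r s => rw [map_sbr, apply_ite g, map_zero, hX, hY, hH, hC.pairing hN]
  | hmixp i j r s =>
    rw [map_sub, map_sbr, map_sbr, map_smul, map_sac, hH, hH, hX, hX, sbr_false_left,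
      sbr_false_left, sac_false_left, ← P.coef_one]
    exact (hC.cartanAction_pos hN i j (r + 1)).succ r s r.lt_succ_self
  | hmixm i j r s =>
    rw [map_sub, map_sbr, map_sbr, map_smul, map_sac, hH, hH, hY, hY, sbr_false_left,
      sbr_false_left, sac_false_left, ← mul_neg, ← P.coef_neg_one]
    exact (hC.cartanAction_neg hN i j (r + 1)).succ r s r.lt_succ_self
  | xmixp i j r s =>
    rw [map_sub, map_sbr, map_sbr, map_smul, map_sac, hX, hX, hX, hX, ← P.coef_one]
    exact sub_eq_zero.1 (hC.pos.mixed_eq_zero shiftsTwo_pos hN i j r s)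
  | xmixm i j r s =>
    rw [map_sub, map_sbr, map_sbr, map_smul, map_sac, hY, hY, hY, hY, ← mul_neg, ← P.coef_neg_one]
    exact sub_eq_zero.1 (hC.neg.mixed_eq_zero shiftsTwo_neg hN i j r s)
  | serrep i j hij rr s =>
    simpa only [map_sum, map_adSeq, List.map_ofFn, Function.comp_def, map_zero, hX] using
      hC.pos.serre_eq_zero shiftsTwo_pos hN hij rr s
  | serrem i j hij rr s =>
    simpa only [map_sum, map_adSeq, List.map_ofFn, Function.comp_def, map_zero, hY] using
      hC.neg.serre_eq_zero shiftsTwo_neg hN hij rr s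
  | oddp i hi r s =>
    rw [map_sbr, map_zero, hX, hX, hC.pos.sbr_self_eq_zero_of_odd shiftsTwo_pos hN hi]
  | oddm i hi r s =>
    rw [map_sbr, map_zero, hY, hY, hC.neg.sbr_self_eq_zero_of_odd shiftsTwo_neg hN hi]
  | oddSp i hi r s =>
    simpa only [map_sbr, map_zero, hX, quartic] using hC.pos.quartic_eq_zero hN hi r s
  | oddSm i hi r s =>
    simpa only [map_sbr, map_zero, hY, quartic] using hC.neg.quartic_eq_zero hN hi r s

end MinimalCurrents

end Presentations

section DrinfeldRelations

variable {A : Type*} [Ring A] [Algebra R A] {m n : ℕ} [NeZero (m + n)] {P : SimpleRootSystem m n}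
  {g : DFree m n →ₐ[R] A}

lemma cartanAction_map_DXp (hg : ∀ ⦃x y⦄, DRel P x y → g x = g y) (i j : Fin (m + n)) (L : ℕ) :
    CartanAction L (P.coef 1 i j) (fun r => g (DH i r)) fun r => g (DXp j r) where
  zero s := by simpa [sbr_false_left, map_ad, P.coef_one] using hg (.hxp i j s)
  succ r s _ := by
    simpa [map_sac, sbr_false_left, map_ad, sac_false_left, P.coef_one] using hg (.hmixp i j r s)

lemma cartanAction_map_DXm (hg : ∀ ⦃x y⦄, DRel P x y → g x = g y) (i j : Fin (m + n)) (L : ℕ) :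
    CartanAction L (P.coef (-1) i j) (fun r => g (DH i r)) fun r => g (DXm j r) where
  zero s := by simpa [sbr_false_left, map_ad, P.coef_neg_one] using hg (.hxm i j s)
  succ r s _ := by
    simpa [map_sac, sbr_false_left, map_ad, sac_false_left, P.coef_neg_one] using
      hg (.hmixm i j r s)

/-- For equal loop indices the Serre sum is `k!` times an iterated adjoint action. -/
lemma adN_eq_zero_of_sum_perm {p q : Bool} {x y : A} {k : ℕ}
    (h : ∑ _τ : Equiv.Perm (Fin k), adSeq p q (List.ofFn fun _ : Fin k => x) y = 0) :
    adN p q x k y = 0 := by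
  rw [Finset.sum_const, Finset.card_univ, List.ofFn_const, adSeq_replicate,
    ← Nat.cast_smul_eq_nsmul R] at h
  exact (isUnit_natCast Fintype.card_ne_zero).smul_eq_zero.1 h

lemma rootCurrents_map_DXp (hg : ∀ ⦃x y⦄, DRel P x y → g x = g y) :
    RootCurrents P 1 (fun i r => g (DXp i r)) fun i => logCartan fun r => g (DH i r) where
  shift i j := (cartanAction_map_DXp hg i j 1).ad_logCartan le_rfl
  mixed_zero i j := by
    have h := hg (.xmixp i j 0 0)
    simp only [map_sub, map_sbr, map_smul, map_sac, ← P.coef_one] at h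
    exact sub_eq_zero.2 h
  serre i j hij := adN_eq_zero_of_sum_perm <| by
    simpa [map_adSeq, List.map_ofFn, Function.comp_def] using hg (.serrep i j hij (fun _ => 0) 0)
  odd i hi := by simpa [map_sbr] using hg (.oddp i hi 0 0)
  quartic_zero i hi := by simpa [map_sbr, quartic] using hg (.oddSp i hi 0 0)

lemma rootCurrents_map_DXm (hg : ∀ ⦃x y⦄, DRel P x y → g x = g y) :
    RootCurrents P (-1) (fun i r => g (DXm i r)) fun i => logCartan fun r => g (DH i r) where
  shift i j := (cartanAction_map_DXm hg i j 1).ad_logCartan le_rfl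
  mixed_zero i j := by
    have h := hg (.xmixm i j 0 0)
    simp only [map_sub, map_sbr, map_smul, map_sac, ← mul_neg, ← P.coef_neg_one] at h
    exact sub_eq_zero.2 h
  serre i j hij := adN_eq_zero_of_sum_perm <| by
    simpa [map_adSeq, List.map_ofFn, Function.comp_def] using hg (.serrem i j hij (fun _ => 0) 0)
  odd i hi := by simpa [map_sbr] using hg (.oddm i hi 0 0)
  quartic_zero i hi := by simpa [map_sbr, quartic] using hg (.oddSm i hi 0 0)

lemma minimalCurrents_of_drel (hg : ∀ ⦃x y⦄, DRel P x y → g x = g y) :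
    MinimalCurrents P (fun i r => g (DXp i r)) (fun i r => g (DXm i r))
      fun i r => g (DH i r) where
  pos := rootCurrents_map_DXp hg
  neg := rootCurrents_map_DXm hg
  weight_pos i j := (cartanAction_map_DXp hg i j 0).zero
  weight_neg i j := (cartanAction_map_DXm hg i j 0).zero
  cartan_eq i r := by simpa [map_sbr] using (hg (.pm i i r 0)).symm
  cartan_one_eq i := by simpa [map_sbr] using (hg (.pm i i 0 1)).symm
  ad_cartan_one i j := by simpa [sbr_false_left, map_ad] using hg (.hh i j 1 1)
  pairing_zero i j hij := by simpa [map_sbr, hij] using hg (.pm i j 0 0)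

end DrinfeldRelations

section Uniqueness

variable {A B : Type*} [Ring A] [Algebra R A] [Ring B] [Algebra R B] {m n : ℕ} [NeZero (m + n)]
  {P : SimpleRootSystem m n} {φ : A →ₐ[R] B}

lemma RootCurrents.map_eq (hN : 3 ≤ m + n) {σ : ℤˣ} {X : Fin (m + n) → ℕ → A}
    {X' : Fin (m + n) → ℕ → B} {t : Fin (m + n) → A} {t' : Fin (m + n) → B}
    (hX : RootCurrents P σ X t) (hX' : RootCurrents P σ X' t') (ht : ∀ i, φ (t i) = t' i)
    (h0 : ∀ i, φ (X i 0) = X' i 0) (i : Fin (m + n)) (r : ℕ) : φ (X i r) = X' i r := by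
  induction r with
  | zero => exact h0 i
  | succ r ih =>
    rw [← (P.isUnit_coef (P.isUnit_a_succ_left hN i) σ).smul_left_cancel, ← map_smul, ← hX.shift,
      ← hX'.shift, map_ad, ht, ih]

lemma MinimalCurrents.map_eq {X Y H : Fin (m + n) → ℕ → A} {X' Y' H' : Fin (m + n) → ℕ → B}
    (hC : MinimalCurrents P X Y H) (hC' : MinimalCurrents P X' Y' H') (hN : 3 ≤ m + n)
    (hX : ∀ i, φ (X i 0) = X' i 0) (hY : ∀ i, φ (Y i 0) = Y' i 0) (hH : ∀ i, φ (H i 1) = H' i 1)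
    (i : Fin (m + n)) (r : ℕ) : φ (X i r) = X' i r ∧ φ (Y i r) = Y' i r ∧ φ (H i r) = H' i r := by
  have map_H_zero i : φ (H i 0) = H' i 0 := by
    rw [hC.cartan_eq, hC'.cartan_eq, map_sbr, hX, hY]
  have map_logCartan i : φ (logCartan (H i)) = logCartan (H' i) := by
    simp only [logCartan, map_sub, map_smul, map_mul, map_H_zero, hH]
  have map_X := hC.pos.map_eq hN hC'.pos map_logCartan hX
  refine ⟨map_X i r, hC.neg.map_eq hN hC'.neg map_logCartan hY i r, ?_⟩
  rw [hC.cartan_eq, hC'.cartan_eq, map_sbr, map_X, hY]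

end Uniqueness

/-! ### The isomorphism -/

section Isomorphism

variable {A : Type*} [Ring A] [Algebra R A] {m n : ℕ} [NeZero (m + n)] {P : SimpleRootSystem m n}
  {X Y H : Fin (m + n) → ℕ → A}

lemma Ymin.hom_ext {φ ψ : Ymin P →ₐ[R] A} (hX : ∀ i r, φ (xgp P i r) = ψ (xgp P i r))
    (hY : ∀ i r, φ (xgm P i r) = ψ (xgm P i r)) (hH : ∀ i r, φ (hg P i r) = ψ (hg P i r)) :
    φ = ψ :=
  RingQuot.ringQuot_ext' R _ _ <| FreeAlgebra.hom_ext <| funext fun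
    | .xp i r => hX i r
    | .xm i r => hY i r
    | .h i r => hH i r

lemma YD.hom_ext {φ ψ : YD P →ₐ[R] A} (hX : ∀ i r, φ (xdp P i r) = ψ (xdp P i r))
    (hY : ∀ i r, φ (xdm P i r) = ψ (xdm P i r)) (hH : ∀ i r, φ (hd P i r) = ψ (hd P i r)) :
    φ = ψ :=
  RingQuot.ringQuot_ext' R _ _ <| FreeAlgebra.hom_ext <| funext fun
    | .xp i r => hX i r
    | .xm i r => hY i r
    | .h i r => hH i r

lemma MinimalCurrents.exists_hom_Ymin (hC : MinimalCurrents P X Y H) (hN : 5 ≤ m + n) :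
    ∃ φ : Ymin P →ₐ[R] A, ∀ i (r : Fin 2),
      φ (xgp P i r) = X i r ∧ φ (xgm P i r) = Y i r ∧ φ (hg P i r) = H i r := by
  let f : MFree m n →ₐ[R] A := FreeAlgebra.lift R fun
    | .xp i r => X i r
    | .xm i r => Y i r
    | .h i r => H i r
  have hX i (r : Fin 2) : f (MXp i r) = X i r := FreeAlgebra.lift_ι_apply _ _
  have hY i (r : Fin 2) : f (MXm i r) = Y i r := FreeAlgebra.lift_ι_apply _ _
  have hH i (r : Fin 2) : f (MH i r) = H i r := FreeAlgebra.lift_ι_apply _ _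
  have f_mk x :
      RingQuot.liftAlgHom R ⟨f, fun _ _ => hC.map_eq_of_mrel hN hX hY hH⟩ (mkY P x) = f x :=
    RingQuot.liftAlgHom_mkAlgHom_apply _ _ _ _
  exact ⟨_, fun i r => ⟨(f_mk _).trans (hX i r), (f_mk _).trans (hY i r), (f_mk _).trans (hH i r)⟩⟩

lemma MinimalCurrents.exists_hom_YD (hC : MinimalCurrents P X Y H) (hN : 5 ≤ m + n) :
    ∃ φ : YD P →ₐ[R] A, ∀ i r,
      φ (xdp P i r) = X i r ∧ φ (xdm P i r) = Y i r ∧ φ (hd P i r) = H i r := by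
  let g : DFree m n →ₐ[R] A := FreeAlgebra.lift R fun
    | .xp i r => X i r
    | .xm i r => Y i r
    | .h i r => H i r
  have hX i r : g (DXp i r) = X i r := FreeAlgebra.lift_ι_apply _ _
  have hY i r : g (DXm i r) = Y i r := FreeAlgebra.lift_ι_apply _ _
  have hH i r : g (DH i r) = H i r := FreeAlgebra.lift_ι_apply _ _
  have g_mk x :
      RingQuot.liftAlgHom R ⟨g, fun _ _ => hC.map_eq_of_drel hN hX hY hH⟩ (mkD P x) = g x :=
    RingQuot.liftAlgHom_mkAlgHom_apply _ _ _ _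
  exact ⟨_, fun i r => ⟨(g_mk _).trans (hX i r), (g_mk _).trans (hY i r), (g_mk _).trans (hH i r)⟩⟩

lemma minimalCurrents_YD : MinimalCurrents P (xdp P) (xdm P) (hd P) :=
  minimalCurrents_of_drel (A := YD P) (g := mkD P) fun _ _ h => RingQuot.mkAlgHom_rel R h

lemma exists_minimalCurrents_Ymin (P : SimpleRootSystem m n) (hN : 3 ≤ m + n) :
    ∃ X Y H : Fin (m + n) → ℕ → Ymin P, MinimalCurrents P X Y H ∧
      ∀ i (r : Fin 2), xgp P i r = X i r ∧ xgm P i r = Y i r ∧ hg P i r = H i r :=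
  exists_minimalCurrents (A := Ymin P) (f := mkY P) (fun _ _ h => RingQuot.mkAlgHom_rel R h) hN

theorem minimalistic_iso_drinfeld_general (hN : 5 ≤ m + n) (P : SimpleRootSystem m n) :
    ∃ E : Ymin P ≃ₐ[R] YD P, MatchesGenerators P E := by
  obtain ⟨X, Y, H, hC, hXYH⟩ := exists_minimalCurrents_Ymin P (by omega)
  obtain ⟨φ, hφ⟩ := (minimalCurrents_YD (P := P)).exists_hom_Ymin hN
  obtain ⟨ψ, hψ⟩ := hC.exists_hom_YD hN
  have hφC := hC.map_eq (φ := φ) minimalCurrents_YD (by omega)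
    (fun i => (congrArg φ (hXYH i 0).1).symm.trans (hφ i 0).1)
    (fun i => (congrArg φ (hXYH i 0).2.1).symm.trans (hφ i 0).2.1)
    (fun i => (congrArg φ (hXYH i 1).2.2).symm.trans (hφ i 1).2.2)
  have hφψ : φ.comp ψ = AlgHom.id R (YD P) := by
    refine YD.hom_ext (A := YD P) ?_ ?_ ?_ <;> intro i r <;> simp [hψ, hφC]
  have hψφ : ψ.comp φ = AlgHom.id R (Ymin P) := by
    refine Ymin.hom_ext (A := Ymin P) ?_ ?_ ?_ <;> intro i r <;> simp [hψ, hφC, hXYH]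
  exact ⟨AlgEquiv.ofAlgHom φ ψ hφψ hψφ, hφ⟩

end Isomorphism

/-- For any simple root system `Π` of `ŝl(m|n)` with `m, n ≥ 2` and `m ≠ n`,
the minimalistic affine super Yangian `Y_ℏ(ŝl(m|n,Π))` is isomorphic, as an associative
superalgebra, to the Drinfeld affine super Yangian `Y^D_ℏ(ŝl(m|n,Π))`, via an isomorphism
sending the generators `x^±_{α_i,r}`, `h_{α_i,r}` (`r ∈ {0,1}`) to the generators
of the same name. -/
theorem minimalistic_iso_drinfeld (m n : ℕ) [NeZero (m + n)] (hm : 2 ≤ m) (hn : 2 ≤ n)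
    (hmn : m ≠ n) (P : SimpleRootSystem m n) :
    ∃ E : Ymin P ≃ₐ[R] YD P, MatchesGenerators P E :=
  minimalistic_iso_drinfeld_general (by omega) P

end ASY
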